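/- Let q be a prime power and n a positive integer. If q^{n/2 − 2} > 2^{ω(q^n − 1) + 2}, then for every a, b in F_q there exists a nonzero element ξ in F_{q^n} such that Tr(ξ) = a, Tr(ξ^{-1}) = b, and ξ + ξ^{-1} is a primitive element of F_{q^n}. -/

import Mathlib

/-- leading term lemma: distinct valuations -/
lemma st_val_sum {K L Γ J : Type*} [Field K] [Field L] [Algebra K L]
    [LinearOrderedCommGroupWithZero Γ] (V : Valuation L Γ) (e : J → L) (wt : J → ℕ)
    (hwt : Function.Injective wt) (D : ℕ) (hD : D ≠ 0) (γ : Γ) (hγ : 1 < γ)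
    (hV : ∀ j, V (e j) ^ D = γ ^ wt j)
    (hK : ∀ c : K, c ≠ 0 → V (algebraMap K L c) = 1)
    (c : J →₀ K) (j : J) (hj : c j ≠ 0) :
    γ ^ wt j ≤ V (c.sum fun i a => a • e i) ^ D := by
  classical
  have hne : c.support.Nonempty := ⟨j, by simpa using hj⟩
  obtain ⟨m, hm, hmax⟩ := c.support.exists_max_image wt hne
  have hterm : ∀ i ∈ c.support, V (c i • e i) ^ D = γ ^ wt i := by
    intro i hi
    rw [Algebra.smul_def, map_mul, hK _ (by simpa using hi), one_mul, hV]
  have hlt : ∀ i ∈ c.support \ {m}, V (c i • e i) < V (c m • e m) := by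
    intro i hi
    simp only [Finset.mem_sdiff, Finset.mem_singleton] at hi
    refine lt_of_pow_lt_pow_left₀ D (zero_le) ?_
    rw [hterm i hi.1, hterm m hm]
    exact pow_lt_pow_right₀ hγ (lt_of_le_of_ne (hmax i hi.1) (fun h => hi.2 (hwt h)))
  have hkey : V (c.sum fun i a => a • e i) = V (c m • e m) := by
    rw [Finsupp.sum]
    exact Valuation.map_sum_eq_of_lt V hm hlt
  rw [hkey, hterm m hm]
  exact pow_le_pow_right₀ hγ.le (hmax j (by simpa using hj))

/-- abstract Stepanov-Bombieri construction -/
lemma st_aux {K Ω L Γ R J : Type*} [Field K] [Field Ω] [Algebra K Ω] [Field L] [Algebra K L]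
    [LinearOrderedCommGroupWithZero Γ] [CommRing R] [Algebra K R]
    (p : ℕ) [ExpChar Ω p] (r M : ℕ) (hMp : M = p ^ r)
    (hcard : ∀ c : K, c ^ (M ^ 2) = c)
    (V : Valuation L Γ) (ι : R →ₐ[K] L) (σ : R →ₐ[K] R) (Pts : Set (R →ₐ[K] Ω))
    (e : J → R) (wt : J → ℕ)
    (hwt : Function.Injective wt) (D : ℕ) (hD : D ≠ 0) (γ : Γ) (hγ : 1 < γ)
    (hV : ∀ j, V (ι (e j)) ^ D = γ ^ wt j)
    (hVσ : ∀ j, V (ι (σ (e j))) ^ D ≤ γ ^ wt j)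
    (hK : ∀ c : K, c ≠ 0 → V (algebraMap K L c) = 1)
    (hP : ∀ P ∈ Pts, ∀ t, P (σ t) = P t ^ (M ^ 2))
    (hnf : ∀ b : R, ∃ c : J →₀ K, (ι b = c.sum fun j a => a • ι (e j)) ∧
      ∀ P ∈ Pts, P b = c.sum fun j a => a • P (e j))
    (κ : ℕ) (hκ : ∀ m, κ ≤ m → ∃ j, wt j = m) (hM : 2 * κ + 3 < M) :
    ∃ c : J →₀ K, c ≠ 0 ∧ (∀ j, c j ≠ 0 → wt j ≤ M ^ 2 + (3 * κ + 3) * M) ∧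
      ∀ P ∈ Pts, (c.sum fun j a => a • P (e j)) = 0 := by
  classical
  have hnz : ∀ (c : J →₀ K) (m : ℕ), V (c.sum fun j a => a • ι (e j)) ^ D ≤ γ ^ m →
      ∀ j, c j ≠ 0 → wt j ≤ m := by
    intro c m hc j hj
    have := (st_val_sum V (fun j => ι (e j)) wt hwt D hD γ hγ hV hK c j hj).trans hc
    exact (pow_le_pow_iff_right₀ hγ).1 this
  have hγ0 : γ ≠ 0 := (lt_trans zero_lt_one hγ).ne'
  choose jm hjm using fun m : ℕ => hκ (κ + m) (by omega)
  set A := M - κ with hA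
  set B := M + 2 * κ + 2 with hB
  set mm := (M - 1) * M + κ + B - 1 with hmm
  let e' : Fin (mm + 1) → L := fun m => if h : ∃ j, wt j = m then ι (e h.choose) else 0
  let T := Submodule.span K (Set.range e')
  have hT : Module.finrank K T ≤ mm + 1 := by
    have := finrank_range_le_card (R := K) e'
    simpa [Set.finrank] using this
  have hTfin : Module.Finite K T := by
    apply FiniteDimensional.span_of_finite
    exact Set.finite_range _
  have hmemT : ∀ j, wt j ≤ mm → ι (e j) ∈ T := by
    intro j hj
    apply Submodule.subset_span
    refine ⟨⟨wt j, by omega⟩, ?_⟩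
    have h : ∃ j', wt j' = wt j := ⟨j, rfl⟩
    have h2 : h.choose = j := hwt h.choose_spec
    simp only [e']
    rw [dif_pos h, h2]
  have hmem : ∀ b : R, V (ι b) ^ D ≤ γ ^ mm → ι b ∈ T := by
    intro b hb
    obtain ⟨c, hc, -⟩ := hnf b
    rw [hc]
    refine Submodule.sum_mem _ fun j hj => Submodule.smul_mem _ _ (hmemT j ?_)
    rw [hc] at hb
    exact hnz c mm hb j (by simpa using hj)
  let w : Fin A × Fin B → R := fun x => e (jm x.1) ^ M * σ (e (jm x.2))
  have hw : ∀ x, ι (w x) ∈ T := by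
    intro x
    apply hmem
    simp only [w, map_mul, map_pow]
    rw [mul_pow, ← pow_mul, mul_comm M D, pow_mul, hV, ← pow_mul]
    refine (mul_le_mul_right (hVσ _) _).trans ?_
    rw [← pow_add, hjm, hjm]
    refine pow_le_pow_right₀ hγ.le ?_
    have h1 := x.1.2
    have h2 := x.2.2
    have h3 : (κ + x.1) * M ≤ (M - 1) * M := Nat.mul_le_mul_right _ (by omega)
    omega
  obtain ⟨g, hg0, hg⟩ : ∃ g : Fin A × Fin B → K, ∑ x, g x • ι (w x) = 0 ∧ ∃ x, g x ≠ 0 := by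
    have hnli : ¬ LinearIndependent K (fun x => (⟨ι (w x), hw x⟩ : T)) := by
      intro hli
      have h1 := hli.fintype_card_le_finrank
      simp only [Fintype.card_prod, Fintype.card_fin] at h1
      have h2 := h1.trans hT
      obtain ⟨t, ht⟩ : ∃ t, M = 2 * κ + 4 + t := ⟨M - (2 * κ + 4), by omega⟩
      have hA' : A = κ + 4 + t := by omega
      have hm' : mm = (2 * κ + 3 + t) * (2 * κ + 4 + t) + κ + (M + 2 * κ + 2) - 1 := by
        rw [hmm, hB, ht, show 2 * κ + 4 + t - 1 = 2 * κ + 3 + t by omega]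
      have hm'' : mm + 1 = (2 * κ + 3 + t) * (2 * κ + 4 + t) + κ + (M + 2 * κ + 2) := by omega
      rw [hm'', hA', hB, ht] at h2
      nlinarith
    rw [Fintype.not_linearIndependent_iff] at hnli
    obtain ⟨g, h1, h2⟩ := hnli
    refine ⟨g, ?_, h2⟩
    have := congrArg (Submodule.subtype T) h1
    simpa using this
  -- the relation vanishes at points
  have hrel : ∀ P ∈ Pts, ∑ x, g x • P (w x) = 0 := by
    intro P hPm
    obtain ⟨c, hc1, hc2⟩ := hnf (∑ x, g x • w x)
    have hc0 : c = 0 := by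
      by_contra hne
      obtain ⟨j, hj⟩ := Finsupp.ne_iff.1 hne
      have h3 := st_val_sum V (fun j => ι (e j)) wt hwt D hD γ hγ hV hK c j hj
      rw [← hc1, map_sum] at h3
      simp only [map_smul] at h3
      rw [hg0, map_zero, zero_pow hD] at h3
      exact (pow_ne_zero _ hγ0) (le_antisymm h3 (zero_le))
    have := hc2 P hPm
    rw [hc0] at this
    simpa using this
  let H : R := ∑ x, (g x) ^ M • (e (jm x.1) * e (jm x.2) ^ M)
  have hPH : ∀ P ∈ Pts, P H = 0 := by
    intro P hPm
    have h1 : (P H) ^ M = 0 := by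
      rw [← hrel P hPm]
      simp only [H, map_sum, map_smul]
      rw [hMp, sum_pow_char_pow, ← hMp]
      refine Finset.sum_congr rfl fun x _ => ?_
      simp only [w, map_mul, map_pow]
      rw [hP P hPm, smul_pow, mul_pow, ← pow_mul, ← pow_mul, ← sq, hcard]
    have hM0 : M ≠ 0 := by omega
    exact pow_eq_zero_iff hM0 |>.1 h1
  -- weights of products
  have hH : ∀ x : Fin A × Fin B, g x ≠ 0 → γ ^ (κ + x.1 + (κ + x.2) * M) ≤ V (ι H) ^ D := by
    intro x hx
    let c : (Fin A × Fin B) →₀ K := Finsupp.equivFunOnFinite.symm (fun x => g x ^ M)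
    have h1 := st_val_sum V (fun x : Fin A × Fin B => ι (e (jm x.1) * e (jm x.2) ^ M))
      (fun x => κ + x.1 + (κ + x.2) * M) ?_ D hD γ hγ ?_ hK c x ?_
    · rw [Finsupp.sum_fintype] at h1
      · simpa [H, c, map_sum] using h1
      · intro i; simp
    · rintro ⟨a, b⟩ ⟨a', b'⟩ hab
      simp only at hab
      have ha : κ + (a : ℕ) < M := by have := a.2; omega
      have ha' : κ + (a' : ℕ) < M := by have := a'.2; omega
      have e1 := congrArg (· % M) hab
      simp only [Nat.add_mul_mod_self_right, Nat.mod_eq_of_lt ha, Nat.mod_eq_of_lt ha'] at e1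
      have e2 : (κ + (b : ℕ)) * M = (κ + b') * M := by omega
      have e3 := Nat.eq_of_mul_eq_mul_right (by omega) e2
      ext <;> simp <;> omega
    · intro x
      rw [map_mul, map_pow, map_mul, map_pow, mul_pow, ← pow_mul, mul_comm M D, pow_mul, hV, hV,
        ← pow_mul, ← pow_add, hjm, hjm]
    · simpa [c] using pow_ne_zero M hx
  obtain ⟨c, hc1, hc2⟩ := hnf H
  refine ⟨c, ?_, ?_, ?_⟩
  · rintro rfl
    obtain ⟨x, hx⟩ := hg
    have := hH x hx
    rw [hc1] at this
    simp [hD] at this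
    exact hγ0 this.1
  · refine hnz c _ ?_
    rw [← hc1]
    by_cases h0 : ι H = 0
    · simp [h0, hD]
    · have : ∀ x : Fin A × Fin B, V (ι ((g x) ^ M • (e (jm x.1) * e (jm x.2) ^ M))) ^ D ≤
          γ ^ (M ^ 2 + (3 * κ + 3) * M) := by
        intro x
        by_cases hx : g x = 0
        · simp [hx, hD, show M ≠ 0 by omega]
        · rw [map_smul, Algebra.smul_def, map_mul, hK _ (pow_ne_zero _ hx), one_mul, map_mul,
            map_pow, map_mul, map_pow, mul_pow, ← pow_mul, mul_comm M D, pow_mul, hV, hV,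
            ← pow_mul, ← pow_add, hjm, hjm]
          refine pow_le_pow_right₀ hγ.le ?_
          have h1 := x.1.2
          have h2 := x.2.2
          have h3 : (κ + x.2) * M ≤ (κ + (M + 2 * κ + 1)) * M := Nat.mul_le_mul_right _ (by omega)
          have h4 : κ + (x.1 : ℕ) ≤ M := by omega
          nlinarith
      have hsup : ∃ x : Fin A × Fin B, V (ι H) ≤
          V (ι ((g x) ^ M • (e (jm x.1) * e (jm x.2) ^ M))) := by
        obtain ⟨x0, -⟩ := hg
        obtain ⟨x, -, hx⟩ := Finset.univ.exists_max_image
          (fun x : Fin A × Fin B => V (ι ((g x) ^ M • (e (jm x.1) * e (jm x.2) ^ M)))) ⟨x0, by simp⟩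
        refine ⟨x, ?_⟩
        simp only [H, map_sum]
        exact V.map_sum_le fun i hi => hx i hi
      obtain ⟨x, hx⟩ := hsup
      exact (pow_le_pow_left₀ (zero_le) hx D).trans (this x)
  · intro P hPm
    rw [← hc2 P hPm, hPH P hPm]

lemma st_poly_zero {Ω : Type*} [Field Ω] (n : ℕ) (a : Fin n → Ω) (S : Finset Ω)
    (hS : n ≤ S.card) (h : ∀ s ∈ S, ∑ i, a i * s ^ (i : ℕ) = 0) : ∀ i, a i = 0 := by
  classical
  intro i
  let P : Polynomial Ω := ∑ i, Polynomial.C (a i) * Polynomial.X ^ (i : ℕ)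
  have hdeg : P.degree < n := by
    refine (Polynomial.degree_sum_le _ _).trans_lt ?_
    rw [Finset.sup_lt_iff (by exact WithBot.bot_lt_coe n)]
    intro j _
    exact (Polynomial.degree_C_mul_X_pow_le _ _).trans_lt (by exact_mod_cast j.2)
  have hP : P = 0 := by
    refine Polynomial.eq_zero_of_degree_lt_of_eval_finset_eq_zero S
      (hdeg.trans_le (by exact_mod_cast hS)) ?_
    intro s hs
    simpa [P, Polynomial.eval_finsetSum] using h s hs
  have := congrArg (fun q => Polynomial.coeff q i) hP
  simp only [P, Polynomial.finsetSum_coeff, Polynomial.coeff_C_mul, Polynomial.coeff_X_pow,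
    Polynomial.coeff_zero] at this
  simpa [Fin.val_inj] using this

open MvPolynomial in
lemma st_nf {K : Type*} [Field K] (d Q : ℕ) (hd : 0 < d) (hQ : 1 < Q) (u v : K)
    (I : Ideal (MvPolynomial (Fin 3) K))
    (h1 : (X 1 ^ d - (X 0 ^ 2 + 1) * X 0 ^ (d - 1) : MvPolynomial (Fin 3) K) ∈ I)
    (h2 : (X 2 ^ Q - (X 0 ^ (Q - 1) * X 2 + C u * X 0 ^ (Q + 1) + C v * X 0 ^ (Q - 1)) :
      MvPolynomial (Fin 3) K) ∈ I) (b : MvPolynomial (Fin 3) K) :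
    ∃ c : (ℕ × Fin d × Fin Q) →₀ K,
      b - (c.sum fun j a => a • (X 0 ^ j.1 * X 1 ^ (j.2.1 : ℕ) * X 2 ^ (j.2.2 : ℕ) :
        MvPolynomial (Fin 3) K)) ∈ I := by
  let e : (ℕ × Fin d × Fin Q) → MvPolynomial (Fin 3) K :=
    fun j => X 0 ^ j.1 * X 1 ^ (j.2.1 : ℕ) * X 2 ^ (j.2.2 : ℕ)
  let T : Submodule K (MvPolynomial (Fin 3) K) :=
    Submodule.span K (Set.range e) ⊔ I.restrictScalars K
  have he : ∀ (l i j : ℕ), i < d → j < Q →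
      (X 0 ^ l * X 1 ^ i * X 2 ^ j : MvPolynomial (Fin 3) K) ∈ T := by
    intro l i j hi hj
    exact Submodule.mem_sup_left (Submodule.subset_span ⟨(l, ⟨i, hi⟩, ⟨j, hj⟩), rfl⟩)
  have hI : ∀ x ∈ I, x ∈ T := fun x hx => Submodule.mem_sup_right hx
  have hmul : ∀ x ∈ T, ∀ k, x * X k ∈ T := by
    intro x hx k
    obtain ⟨y, hy, z, hz, rfl⟩ := Submodule.mem_sup.1 hx
    rw [add_mul]
    refine T.add_mem ?_ (hI _ (I.mul_mem_right _ hz))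
    have hle : Submodule.span K (Set.range e) ≤
        T.comap (LinearMap.mulRight K (X k : MvPolynomial (Fin 3) K)) := by
      rw [Submodule.span_le]
      rintro _ ⟨⟨l, ⟨i, hi⟩, ⟨j, hj⟩⟩, rfl⟩
      simp only [SetLike.mem_coe, Submodule.mem_comap, LinearMap.mulRight_apply, e]
      fin_cases k
      · convert! he (l + 1) i j hi hj using 1
        simp only [Fin.zero_eta]; ring
      · simp only [Fin.mk_one]
        by_cases hi' : i + 1 < d
        · convert! he l (i + 1) j hi' hj using 1
          ring
        · have hid : i + 1 = d := by omega
          have : (X 0 ^ l * X 1 ^ i * X 2 ^ j * X 1 : MvPolynomial (Fin 3) K) =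
            (X 0 ^ l * X 2 ^ j) * (X 1 ^ d - (X 0 ^ 2 + 1) * X 0 ^ (d - 1)) +
            (X 0 ^ (l + (d - 1) + 2) * X 1 ^ 0 * X 2 ^ j +
              X 0 ^ (l + (d - 1)) * X 1 ^ 0 * X 2 ^ j) := by
            rw [← hid]; ring
          rw [this]
          exact T.add_mem (hI _ (I.mul_mem_left _ h1))
            (T.add_mem (he _ _ _ hd hj) (he _ _ _ hd hj))
      · simp only [Fin.reduceFinMk]
        by_cases hj' : j + 1 < Q
        · convert! he l i (j + 1) hi hj' using 1
          ring
        · have hjQ : j + 1 = Q := by omega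
          have : (X 0 ^ l * X 1 ^ i * X 2 ^ j * X 2 : MvPolynomial (Fin 3) K) =
            (X 0 ^ l * X 1 ^ i) * (X 2 ^ Q - (X 0 ^ (Q - 1) * X 2 + C u * X 0 ^ (Q + 1)
              + C v * X 0 ^ (Q - 1))) +
            (X 0 ^ (l + (Q - 1)) * X 1 ^ i * X 2 ^ 1 +
              u • (X 0 ^ (l + (Q + 1)) * X 1 ^ i * X 2 ^ 0) +
              v • (X 0 ^ (l + (Q - 1)) * X 1 ^ i * X 2 ^ 0)) := by
            rw [smul_eq_C_mul, smul_eq_C_mul, ← hjQ]; ring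
          rw [this]
          exact T.add_mem (hI _ (I.mul_mem_left _ h2))
            (T.add_mem (T.add_mem (he _ _ _ hi hQ) (T.smul_mem _ (he _ _ _ hi (by omega))))
              (T.smul_mem _ (he _ _ _ hi (by omega))))
    exact hle hy
  have hall : b ∈ T := by
    induction b using MvPolynomial.induction_on with
    | C a =>
      have := T.smul_mem a (he 0 0 0 hd (by omega))
      simpa [smul_eq_C_mul] using this
    | add p q hp hq => exact T.add_mem hp hq
    | mul_X p k hp => exact hmul p hp k
  obtain ⟨y, hy, z, hz, rfl⟩ := Submodule.mem_sup.1 hall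
  obtain ⟨c, rfl⟩ := Finsupp.mem_span_range_iff_exists_finsupp.1 hy
  exact ⟨c, by simpa [e] using hz⟩

lemma st_wt_inj (d Q : ℕ) (hd : 0 < d) (hdQ : d + 1 = Q) :
    Function.Injective (fun j : ℕ × Fin d × Fin Q =>
      d * Q * j.1 + Q * Q * j.2.1 + d * (Q + 1) * j.2.2) := by
  rintro ⟨l, ⟨i, hi⟩, ⟨j, hj⟩⟩ ⟨l', ⟨i', hi'⟩, ⟨j', hj'⟩⟩ h
  simp only at h
  have e1 : i = i' := by
    have : i ≡ i' [MOD d] := by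
      have h1 : ∀ l i j : ℕ, d * Q * l + Q * Q * i + d * (Q + 1) * j =
          i + d * (Q * l + (d + 2) * i + (Q + 1) * j) := by
        intro l i j; rw [← hdQ]; ring
      rw [h1, h1] at h
      have := congrArg (· % d) h
      simpa [Nat.ModEq] using this
    exact Nat.ModEq.eq_of_lt_of_lt this hi hi'
  subst e1
  have e2 : j = j' := by
    have h1 : d * j ≡ d * j' [MOD Q] := by
      have h1 : ∀ l i j : ℕ, d * Q * l + Q * Q * i + d * (Q + 1) * j =
          d * j + Q * (d * l + Q * i + d * j) := by
        intro l i j; ring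
      rw [h1, h1] at h
      have := congrArg (· % Q) h
      simpa [Nat.ModEq] using this
    have h2 : j ≡ j' [MOD Q] := by
      refine Nat.ModEq.cancel_left_of_coprime ?_ h1
      rw [← hdQ]; simp
    exact Nat.ModEq.eq_of_lt_of_lt h2 hj hj'
  subst e2
  have e3 : d * Q * l = d * Q * l' := by omega
  have := Nat.eq_of_mul_eq_mul_left (Nat.mul_pos hd (by omega)) e3
  subst this; rfl

lemma st_wt_surj (d Q : ℕ) (hd : 0 < d) (hdQ : d + 1 = Q) (m : ℕ)
    (hm : Q * Q * d + d * (Q + 1) * Q ≤ m) :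
    ∃ j : ℕ × Fin d × Fin Q, d * Q * j.1 + Q * Q * j.2.1 + d * (Q + 1) * j.2.2 = m := by
  set i := m % d with hi
  set j := (m * d) % Q with hj
  have hi1 : i < d := Nat.mod_lt _ hd
  have hj1 : j < Q := Nat.mod_lt _ (by omega)
  have hle : Q * Q * i + d * (Q + 1) * j ≤ m := by
    refine le_trans ?_ hm
    gcongr
  have hmodd : Q * Q * i + d * (Q + 1) * j ≡ m [MOD d] := by
    have h1 : Q * Q * i + d * (Q + 1) * j = i + d * ((d + 2) * i + (Q + 1) * j) := by
      rw [← hdQ]; ring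
    rw [h1]
    have : i ≡ m [MOD d] := Nat.mod_modEq _ _
    simpa [Nat.ModEq] using this
  have hmodQ : Q * Q * i + d * (Q + 1) * j ≡ m [MOD Q] := by
    have h1 : Q * Q * i + d * (Q + 1) * j = d * j + Q * (Q * i + d * j) := by ring
    rw [h1]
    have h2 : d * j ≡ d * (m * d) [MOD Q] := (Nat.mod_modEq _ _).mul_left _
    have h3 : d * (m * d) ≡ m [MOD Q] := by
      obtain ⟨t, rfl⟩ : ∃ t, d = t + 1 := ⟨d - 1, by omega⟩
      have : (t + 1) * (m * (t + 1)) = m + Q * (t * m) := by rw [← hdQ]; ring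
      rw [this]; simp [Nat.ModEq]
    have := h2.trans h3
    simpa [Nat.ModEq] using this
  have hmod : Q * Q * i + d * (Q + 1) * j ≡ m [MOD d * Q] := by
    refine (Nat.modEq_and_modEq_iff_modEq_mul ?_).1 ⟨hmodd, hmodQ⟩
    rw [← hdQ]; simp
  obtain ⟨l, hl⟩ := (Nat.modEq_iff_dvd' hle).1 hmod
  refine ⟨(l, ⟨i, hi1⟩, ⟨j, hj1⟩), ?_⟩
  simp only
  omega

/-- a field with a valuation -/
lemma st_field (K : Type) [Field K] [Finite K] (d Q : ℕ) (hd : 0 < d) (hdQ : d + 1 = Q)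
    (u v : K) (hu : u ≠ 0) : ∃ (L : Type) (_ : Field L) (_ : Algebra K L) (Γ : Type)
    (_ : LinearOrderedCommGroupWithZero Γ) (V : Valuation L Γ) (x y w : L),
    y ^ d = (x ^ 2 + 1) * x ^ (d - 1) ∧
    w ^ Q = x ^ (Q - 1) * w + algebraMap K L u * x ^ (Q + 1) + algebraMap K L v * x ^ (Q - 1) ∧
    1 < V x ∧ V y ^ d = V x ^ Q ∧ V w ^ Q = V x ^ (Q + 1) ∧
    ∀ c : K, c ≠ 0 → V (algebraMap K L c) = 1 := by
  let L := AlgebraicClosure (RatFunc K)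
  let x : L := algebraMap (RatFunc K) L RatFunc.X
  have hx : x ∉ (integralClosure K L).toSubring := by
    intro h
    have h1 : IsIntegral K x := h
    have h2 : IsIntegral K (RatFunc.X : RatFunc K) :=
      (isIntegral_algHom_iff (IsScalarTower.toAlgHom K (RatFunc K) L)
        (algebraMap (RatFunc K) L).injective).1 h1
    exact RatFunc.transcendental_X h2.isAlgebraic
  have hIntg : IsIntegrallyClosedIn (integralClosure K L).toSubring L :=
    inferInstanceAs (IsIntegrallyClosedIn (integralClosure K L) L)
  obtain ⟨A, hA1, hA2⟩ := Subring.exists_le_valuationSubring_of_isIntegrallyClosedIn hx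
  let V := A.valuation
  have hVx : 1 < V x := by
    by_contra h
    exact hA2 ((A.valuation_le_one_iff x).1 (not_lt.1 h))
  have hc1 : ∀ c : K, V (algebraMap K L c) ≤ 1 := by
    intro c
    rw [A.valuation_le_one_iff]
    exact hA1 ((integralClosure K L).algebraMap_mem c)
  have hc : ∀ c : K, c ≠ 0 → V (algebraMap K L c) = 1 := by
    intro c hc
    refine le_antisymm (hc1 c) ?_
    have := hc1 c⁻¹
    rw [map_inv₀, map_inv₀] at this
    have h0 : V (algebraMap K L c) ≠ 0 := by simpa using hc
    exact (inv_le_one₀ (zero_lt_iff.2 h0)).1 this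
  have hx0 : x ≠ 0 := by rintro h; rw [h] at hVx; simp at hVx
  obtain ⟨y, hy⟩ := IsAlgClosed.exists_pow_nat_eq ((x ^ 2 + 1) * x ^ (d - 1)) hd
  obtain ⟨z, hz⟩ : ∃ z : L, z ^ Q - z = algebraMap K L u * x + algebraMap K L v * x⁻¹ := by
    have hdeg : (Polynomial.X ^ Q - Polynomial.X -
        Polynomial.C (algebraMap K L u * x + algebraMap K L v * x⁻¹)).degree ≠ 0 := by
      have : (Polynomial.X ^ Q - Polynomial.X -
        Polynomial.C (algebraMap K L u * x + algebraMap K L v * x⁻¹)).degree = (Q : WithBot ℕ) := by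
        rw [sub_sub, Polynomial.degree_sub_eq_left_of_degree_lt, Polynomial.degree_X_pow]
        rw [Polynomial.degree_X_add_C, Polynomial.degree_X_pow]
        exact_mod_cast (by omega : 1 < Q)
      rw [this]
      exact_mod_cast (by omega : Q ≠ 0)
    obtain ⟨z, hz⟩ := IsAlgClosed.exists_root _ hdeg
    refine ⟨z, ?_⟩
    simp only [Polynomial.IsRoot, Polynomial.eval_sub, Polynomial.eval_pow, Polynomial.eval_X,
      Polynomial.eval_C] at hz
    exact sub_eq_zero.1 hz
  have hVz' : V (z ^ Q - z) = V x := by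
    rw [hz]
    have h1 : V (algebraMap K L u * x) = V x := by rw [map_mul, hc u hu, one_mul]
    rw [Valuation.map_add_eq_of_lt_left, h1]
    rw [h1, map_mul, map_inv₀]
    calc V (algebraMap K L v) * (V x)⁻¹ ≤ 1 * (V x)⁻¹ := by gcongr; exact hc1 v
      _ = (V x)⁻¹ := one_mul _
      _ ≤ 1 := inv_le_one_of_one_le₀ hVx.le
      _ < V x := hVx
  have hVz : V z ^ Q = V x := by
    have hz1 : 1 < V z := by
      by_contra h
      rw [not_lt] at h
      have := Valuation.map_sub V (z ^ Q) z
      rw [hVz'] at this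
      have h2 : max (V (z ^ Q)) (V z) ≤ 1 := max_le (by rw [map_pow]; exact pow_le_one₀ (zero_le) h) h
      exact absurd (this.trans h2) (not_le.2 hVx)
    rw [← hVz', Valuation.map_sub_eq_of_lt_left, map_pow]
    rw [map_pow]
    calc V z = V z ^ 1 := (pow_one _).symm
      _ < V z ^ Q := pow_lt_pow_right₀ hz1 (by omega)
  refine ⟨L, inferInstance, inferInstance, A.ValueGroup, inferInstance, V, x, y, x * z, hy, ?_,
    hVx, ?_, ?_, hc⟩
  · have : z ^ Q = z + (algebraMap K L u * x + algebraMap K L v * x⁻¹) := by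
      rw [← hz]; ring
    rw [mul_pow, this]
    obtain ⟨Q, rfl⟩ : ∃ t, Q = t + 1 := ⟨Q - 1, by omega⟩
    simp only [Nat.add_sub_cancel]
    linear_combination (algebraMap K L v * x ^ Q) * mul_inv_cancel₀ hx0
  · rw [← map_pow, hy, map_mul, map_pow]
    have : V (x ^ 2 + 1) = V x ^ 2 := by
      rw [Valuation.map_add_eq_of_lt_left, map_pow]
      rw [map_one, map_pow]
      exact one_lt_pow₀ hVx (by norm_num)
    rw [this, ← pow_add]
    congr 1; omega
  · rw [map_mul, mul_pow, hVz, pow_succ]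

open MvPolynomial in
lemma st_class0 (Ω : Type) (K : Type) [Field K] [Fintype K] (p : ℕ) [Fact p.Prime] [CharP K p]
    [Field Ω] [Algebra K Ω] [IsAlgClosed Ω] (s r Q M d G : ℕ)
    (hs : 0 < s) (hQ : Q = p ^ s) (hMQ : M = Q ^ r) (hN : Fintype.card K = M ^ 2)
    (hdQ : d + 1 = Q) (hG : G * d = M ^ 2 - 1) (u v ζ η : K) (hu : u ≠ 0) (κ : ℕ)
    (hκ : κ = Q * Q * d + d * (Q + 1) * Q) (hM : 2 * κ + 3 < M) (S : Finset K)
    (hS : ∀ x ∈ S, x ≠ 0 ∧ x + x⁻¹ ≠ 0 ∧ (x + x⁻¹) ^ G = ζ ∧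
      ∑ i ∈ Finset.range (2 * r), (u * x + v * x⁻¹) ^ (Q ^ i) = η) :
    d * Q * S.card ≤ M ^ 2 + (3 * κ + 3) * M := by
  classical
  have hp : 1 < p := (Fact.out : p.Prime).one_lt
  have hQ1 : 1 < Q := hQ ▸ Nat.one_lt_pow hs.ne' hp
  have hd : 0 < d := by omega
  obtain ⟨L, _, _, Γ, _, V, x, y, w, hy, hw, hVx, hVy, hVw, hVc⟩ := st_field K d Q hd hdQ u v hu
  have : CharP Ω p := charP_of_injective_algebraMap (algebraMap K Ω).injective p
  have : ExpChar Ω p := ExpChar.prime Fact.out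
  let ι : (MvPolynomial (Fin 3) K) →ₐ[K] L := aeval ![x, y, w]
  let σ : (MvPolynomial (Fin 3) K) →ₐ[K] (MvPolynomial (Fin 3) K) := aeval ![X 0, C ζ * X 1, X 2 + C η * X 0]
  let Pts : Set ((MvPolynomial (Fin 3) K) →ₐ[K] Ω) := {P | ∃ x0 ∈ S, ∃ y0 w0 : Ω, P = aeval ![algebraMap K Ω x0, y0, w0] ∧
    y0 ^ d = ((algebraMap K Ω x0) ^ 2 + 1) * (algebraMap K Ω x0) ^ (d - 1) ∧
    w0 ^ Q = (algebraMap K Ω x0) ^ (Q - 1) * w0 + algebraMap K Ω u * (algebraMap K Ω x0) ^ (Q + 1)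
      + algebraMap K Ω v * (algebraMap K Ω x0) ^ (Q - 1)}
  let e : (ℕ × Fin d × Fin Q) → (MvPolynomial (Fin 3) K) := fun j => X 0 ^ j.1 * X 1 ^ (j.2.1 : ℕ) * X 2 ^ (j.2.2 : ℕ)
  let wt : (ℕ × Fin d × Fin Q) → ℕ :=
    fun j => d * Q * j.1 + Q * Q * j.2.1 + d * (Q + 1) * j.2.2
  have hVxle : V x ≤ V w := by
    refine le_of_pow_le_pow_left₀ (by omega : Q ≠ 0) (zero_le) ?_
    rw [hVw]
    exact pow_le_pow_right₀ hVx.le (by omega)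
  have hVcle : ∀ c : K, V (algebraMap K L c) ≤ 1 := by
    intro c
    by_cases hc : c = 0
    · simp [hc]
    · exact (hVc c hc).le
  have hVe : ∀ j, V (ι (e j)) ^ (d * Q) = V x ^ wt j := by
    intro j
    simp only [e, ι, wt, map_mul, map_pow, aeval_X, Matrix.cons_val]
    calc (V x ^ j.1 * V y ^ (j.2.1 : ℕ) * V w ^ (j.2.2 : ℕ)) ^ (d * Q) =
        V x ^ (d * Q * j.1) * (V y ^ d) ^ (Q * (j.2.1 : ℕ)) * (V w ^ Q) ^ (d * (j.2.2 : ℕ)) := by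
          simp only [mul_pow, ← pow_mul]
          congr 1
          · congr 1
            · congr 1; ring
            · congr 1; ring
          · congr 1; ring
      _ = _ := by
        rw [hVy, hVw, ← pow_mul, ← pow_mul, ← pow_add, ← pow_add]
        congr 1; ring
  have hVσ : ∀ j, V (ι (σ (e j))) ^ (d * Q) ≤ V x ^ wt j := by
    intro j
    rw [← hVe j]
    refine pow_le_pow_left₀ (zero_le) ?_ _
    simp only [e, ι, σ, map_mul, map_pow, map_add, aeval_X, Matrix.cons_val, aeval_C]
    have h1 : V (algebraMap K L ζ) * V y ≤ V y := by
      calc V (algebraMap K L ζ) * V y ≤ 1 * V y := by gcongr; exact hVcle ζ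
        _ = V y := one_mul _
    have h2 : V (w + algebraMap K L η * x) ≤ V w := by
      refine (V.map_add _ _).trans (max_le le_rfl ?_)
      rw [map_mul]
      calc V (algebraMap K L η) * V x ≤ 1 * V x := by gcongr; exact hVcle η
        _ = V x := one_mul _
        _ ≤ V w := hVxle
    try simp only [map_mul]
    gcongr
  have hMp : M = p ^ (s * r) := by rw [hMQ, hQ, pow_mul]
  have hP : ∀ P ∈ Pts, ∀ t, P (σ t) = P t ^ (M ^ 2) := by
    rintro P ⟨x0, hx0S, y0, w0, rfl, hy0, hw0⟩ t
    obtain ⟨hx0, hf0, hζ, hη⟩ := hS x0 hx0S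
    have hX0 : algebraMap K Ω x0 ≠ 0 := by simpa using hx0
    have hN' : M ^ 2 = p ^ (s * r * 2) := by rw [hMp, ← pow_mul]
    have key : ((aeval ![algebraMap K Ω x0, y0, w0] : (MvPolynomial (Fin 3) K) →ₐ[K] Ω).comp σ : (MvPolynomial (Fin 3) K) →+* Ω) =
        (iterateFrobenius Ω p (s * r * 2)).comp
          ((aeval ![algebraMap K Ω x0, y0, w0] : (MvPolynomial (Fin 3) K) →ₐ[K] Ω) : (MvPolynomial (Fin 3) K) →+* Ω) := by
      refine MvPolynomial.ringHom_ext ?_ ?_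
      · intro c
        simp [σ, iterateFrobenius_def, ← hN', ← map_pow, ← hN, FiniteField.pow_card]
      · intro k
        simp only [RingHom.coe_comp, RingHom.coe_coe, AlgHom.coe_comp, Function.comp_apply,
          iterateFrobenius_def, ← hN', σ, aeval_X]
        fin_cases k
        · simp [← map_pow, ← hN, FiniteField.pow_card]
        · simp only [Fin.mk_one, Matrix.cons_val, map_mul, aeval_X, algHom_C]
          have h1 : y0 ^ d = algebraMap K Ω ((x0 + x0⁻¹) * x0 ^ d) := by
            rw [hy0, ← map_pow, ← map_pow, ← map_one (algebraMap K Ω), ← map_add, ← map_mul]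
            congr 1
            obtain ⟨t, rfl⟩ : ∃ t, d = t + 1 := ⟨d - 1, by omega⟩
            simp only [Nat.add_sub_cancel]
            field_simp
            try ring
          have h2 : M ^ 2 = d * G + 1 := by
            have : 0 < M ^ 2 := by
              have : 0 < M := by omega
              positivity
            rw [mul_comm d G, hG]; omega
          rw [h2, pow_succ, pow_mul, h1, ← map_pow, mul_pow, hζ, ← pow_mul, mul_comm d G, hG,
            ← hN, FiniteField.pow_card_sub_one_eq_one x0 hx0, mul_one]
        · simp only [Fin.reduceFinMk, Matrix.cons_val, map_mul, map_add, aeval_X, algHom_C]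
          let z0 := w0 * (algebraMap K Ω x0)⁻¹
          let g0 := algebraMap K Ω (u * x0 + v * x0⁻¹)
          have hz : z0 ^ Q = z0 + g0 := by
            simp only [z0, g0, mul_pow, hw0]
            obtain ⟨t, rfl⟩ : ∃ t, Q = t + 1 := ⟨Q - 1, by omega⟩
            simp only [Nat.add_sub_cancel, map_add, map_mul, map_inv₀, inv_pow]
            field_simp
            try ring
          have hfrob : ∀ a b : Ω, (a + b) ^ Q = a ^ Q + b ^ Q := by
            intro a b; rw [hQ, add_pow_char_pow]
          have hzk : ∀ k, z0 ^ (Q ^ k) = z0 + ∑ i ∈ Finset.range k, g0 ^ (Q ^ i) := by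
            intro k
            induction k with
            | zero => simp
            | succ k ih =>
              rw [pow_succ', pow_mul, hz, Finset.sum_range_succ]
              have hfk : ∀ a b : Ω, (a + b) ^ (Q ^ k) = a ^ (Q ^ k) + b ^ (Q ^ k) := by
                intro a b; rw [hQ, ← pow_mul, add_pow_char_pow]
              rw [hfk, ih, add_assoc]
          have hw0' : w0 = algebraMap K Ω x0 * z0 := by simp only [z0]; field_simp
          have hMQ2 : M ^ 2 = Q ^ (2 * r) := by rw [hMQ, ← pow_mul, mul_comm]
          rw [hw0', mul_pow]
          conv_rhs => rw [← map_pow, ← hN, FiniteField.pow_card, hN, hMQ2, hzk]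
          rw [← hη, map_sum]
          simp only [map_pow, g0]
          rw [mul_add]
          congr 1
          rw [mul_comm]
    have := congrArg (fun f : (MvPolynomial (Fin 3) K) →+* Ω => f t) key
    simp only [RingHom.comp_apply, iterateFrobenius_def, ← hN'] at this
    exact this
  have hnf : ∀ b : (MvPolynomial (Fin 3) K), ∃ c : (ℕ × Fin d × Fin Q) →₀ K,
      (ι b = c.sum fun j a => a • ι (e j)) ∧
      ∀ P ∈ Pts, P b = c.sum fun j a => a • P (e j) := by
    intro b
    let I : Ideal (MvPolynomial (Fin 3) K) := Ideal.span {(X 1 ^ d - (X 0 ^ 2 + 1) * X 0 ^ (d - 1)),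
      (X 2 ^ Q - (X 0 ^ (Q - 1) * X 2 + C u * X 0 ^ (Q + 1) + C v * X 0 ^ (Q - 1)))}
    obtain ⟨c, hc⟩ := st_nf d Q hd hQ1 u v I (Ideal.subset_span (by simp))
      (Ideal.subset_span (by simp)) b
    have hker : ∀ {A : Type} [CommRing A] [Algebra K A] (f : (MvPolynomial (Fin 3) K) →ₐ[K] A),
        f (X 1) ^ d = (f (X 0) ^ 2 + 1) * f (X 0) ^ (d - 1) →
        f (X 2) ^ Q = f (X 0) ^ (Q - 1) * f (X 2) + algebraMap K A u * f (X 0) ^ (Q + 1)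
          + algebraMap K A v * f (X 0) ^ (Q - 1) →
        f b = c.sum fun j a => a • f (e j) := by
      intro A _ _ f h1 h2
      have hle : I ≤ RingHom.ker f := by
        rw [Ideal.span_le]
        rintro a (rfl | rfl)
        · simp [RingHom.mem_ker, h1]
        · have hC : ∀ c : K, f (C c) = algebraMap K A c := fun c => f.commutes c
          simp [RingHom.mem_ker, h2, hC]
      have := hle hc
      rw [RingHom.mem_ker, map_sub, sub_eq_zero] at this
      rw [this, Finsupp.sum, map_sum]
      simp only [map_smul]
      rfl
    refine ⟨c, hker ι (by simpa [ι] using hy) (by simpa [ι] using hw), ?_⟩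
    rintro P ⟨x0, hx0S, y0, w0, rfl, hy0, hw0⟩
    exact hker _ (by simpa using hy0) (by simpa using hw0)
  obtain ⟨c, hc0, hcwt, hcP⟩ := st_aux p (s * r) M hMp (fun c => by rw [← hN, FiniteField.pow_card])
    V ι σ Pts e wt (st_wt_inj d Q hd hdQ) (d * Q) (by positivity) (V x) hVx hVe hVσ hVc hP hnf κ
    (fun m hm => st_wt_surj d Q hd hdQ m (hκ ▸ hm)) hM
  -- components
  obtain ⟨B, hB⟩ : ∃ B, ∀ j, c j ≠ 0 → j.1 < B := by
    refine ⟨(c.support.sup fun j => j.1) + 1, fun j hj => ?_⟩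
    have := Finset.le_sup (f := fun j : ℕ × Fin d × Fin Q => j.1) (b := j) (s := c.support)
      (by simpa using hj)
    omega
  let h : Fin d → Fin Q → Polynomial K := fun i j =>
    ∑ l ∈ Finset.range B, Polynomial.monomial l (c (l, i, j))
  have hcoeff : ∀ i j l, (h i j).coeff l = c (l, i, j) := by
    intro i j l
    simp only [h, Polynomial.finsetSum_coeff, Polynomial.coeff_monomial]
    rw [Finset.sum_ite_eq']
    split_ifs with hl
    · rfl
    · by_contra hne
      exact hl (Finset.mem_range.2 (hB _ (Ne.symm hne)))
  have hsum : ∀ f : ℕ × Fin d × Fin Q → Ω, (c.sum fun j a => a • f j) =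
      ∑ j, ∑ i, ∑ l ∈ Finset.range B, c (l, i, j) • f (l, i, j) := by
    intro f
    rw [Finsupp.sum_of_support_subset c (s := Finset.range B ×ˢ (Finset.univ ×ˢ Finset.univ))]
    · rw [Finset.sum_product_right, Finset.sum_product_right]
    · intro j hj
      simp only [Finset.mem_product, Finset.mem_range, Finset.mem_univ, and_self, and_true]
      exact hB j (by simpa using hj)
    · simp
  have hroot : ∀ x0 ∈ S, ∀ i j, (h i j).eval x0 = 0 := by
    intro x0 hx0S
    obtain ⟨hx0, hf0, -, -⟩ := hS x0 hx0S
    have hX0 : algebraMap K Ω x0 ≠ 0 := by simpa using hx0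
    have hdne : (d : Ω) ≠ 0 := by
      have : (d : Ω) + 1 = 0 := by
        have : ((d + 1 : ℕ) : Ω) = 0 := by
          rw [hdQ, hQ]; push_cast; rw [CharP.cast_eq_zero, zero_pow hs.ne']
        exact_mod_cast this
      intro h0; rw [h0] at this; simp at this
    set fy : Polynomial Ω := Polynomial.X ^ d -
      Polynomial.C (((algebraMap K Ω x0) ^ 2 + 1) * (algebraMap K Ω x0) ^ (d - 1)) with hfy
    have hsepy : fy.Separable := by
      refine Polynomial.separable_X_pow_sub_C _ hdne ?_
      refine mul_ne_zero ?_ (pow_ne_zero _ hX0)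
      intro h0
      have h1 : algebraMap K Ω (x0 ^ 2 + 1) = 0 := by simpa using h0
      have h2 : x0 ^ 2 + 1 = 0 := (map_eq_zero (algebraMap K Ω)).1 h1
      apply hf0
      field_simp
      rw [h2, mul_zero]
    set fw : Polynomial Ω := Polynomial.X ^ Q -
      (Polynomial.C ((algebraMap K Ω x0) ^ (Q - 1)) * Polynomial.X +
       Polynomial.C (algebraMap K Ω u * (algebraMap K Ω x0) ^ (Q + 1)
      + algebraMap K Ω v * (algebraMap K Ω x0) ^ (Q - 1))) with hfw
    have hQ0 : (Q : Ω) = 0 := by rw [hQ]; push_cast; rw [CharP.cast_eq_zero, zero_pow hs.ne']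
    have hsepw : fw.Separable := by
      have hder : Polynomial.derivative fw =
          Polynomial.C (-((algebraMap K Ω x0) ^ (Q - 1))) := by
        rw [hfw, Polynomial.derivative_sub, Polynomial.derivative_X_pow, Polynomial.derivative_add, Polynomial.derivative_C, Polynomial.derivative_C_mul, Polynomial.derivative_X, hQ0, map_neg]
        simp only [map_zero, zero_mul, mul_one, add_zero, zero_sub]
      rw [Polynomial.Separable, hder]
      have hu : IsUnit (Polynomial.C (-((algebraMap K Ω x0) ^ (Q - 1)))) := by
        rw [Polynomial.isUnit_C]
        exact (neg_ne_zero.2 (pow_ne_zero _ hX0)).isUnit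
      obtain ⟨b, hb⟩ := hu.exists_left_inv
      exact ⟨0, b, by rw [zero_mul, zero_add, hb]⟩
    have hdegw : fw.natDegree = Q := by
      rw [hfw, Polynomial.natDegree_sub_eq_left_of_natDegree_lt, Polynomial.natDegree_X_pow]
      rw [Polynomial.natDegree_X_pow]
      exact (Polynomial.natDegree_linear_le).trans_lt hQ1
    have hcy : (fy.rootSet Ω).toFinset.card = d := by
      rw [Set.toFinset_card, Polynomial.card_rootSet_eq_natDegree hsepy (IsAlgClosed.splits _),
        hfy, Polynomial.natDegree_X_pow_sub_C]
    have hcw : (fw.rootSet Ω).toFinset.card = Q := by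
      rw [Set.toFinset_card, Polynomial.card_rootSet_eq_natDegree hsepw (IsAlgClosed.splits _),
        hdegw]
    have hzero : ∀ y0 ∈ (fy.rootSet Ω).toFinset, ∀ w0 ∈ (fw.rootSet Ω).toFinset,
        ∑ j : Fin Q, (∑ i : Fin d, algebraMap K Ω ((h i j).eval x0) * y0 ^ (i : ℕ)) * w0 ^ (j : ℕ)
          = 0 := by
      intro y0 hy0 w0 hw0
      rw [Set.mem_toFinset, Polynomial.mem_rootSet] at hy0 hw0
      have hy1 : y0 ^ d = ((algebraMap K Ω x0) ^ 2 + 1) * (algebraMap K Ω x0) ^ (d - 1) := by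
        have := hy0.2
        simpa [hfy, sub_eq_zero] using this
      have hw1 : w0 ^ Q = (algebraMap K Ω x0) ^ (Q - 1) * w0 +
          algebraMap K Ω u * (algebraMap K Ω x0) ^ (Q + 1)
          + algebraMap K Ω v * (algebraMap K Ω x0) ^ (Q - 1) := by
        have := hw0.2
        simp [hfw, sub_eq_zero] at this
        rw [this]; ring
      have := hcP _ ⟨x0, hx0S, y0, w0, rfl, hy1, hw1⟩
      rw [hsum] at this
      rw [← this]
      refine Finset.sum_congr rfl fun j _ => ?_
      rw [Finset.sum_mul]
      refine Finset.sum_congr rfl fun i _ => ?_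
      simp only [h, Polynomial.eval_finsetSum, Polynomial.eval_monomial, map_sum, map_mul, map_pow,
        Finset.sum_mul, e, aeval_X, Matrix.cons_val, Algebra.smul_def]
      refine Finset.sum_congr rfl fun l _ => ?_
      ring
    have h1 : ∀ y0 ∈ (fy.rootSet Ω).toFinset, ∀ j : Fin Q,
        ∑ i : Fin d, algebraMap K Ω ((h i j).eval x0) * y0 ^ (i : ℕ) = 0 := fun y0 hy0 =>
      st_poly_zero Q _ _ hcw.ge (hzero y0 hy0)
    intro i j
    have h2 := st_poly_zero d (fun i => algebraMap K Ω ((h i j).eval x0)) _ hcy.ge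
      (fun y0 hy0 => h1 y0 hy0 j) i
    simpa using h2
  obtain ⟨⟨l, i, j⟩, hlij⟩ := Finsupp.ne_iff.1 hc0
  have hne : h i j ≠ 0 := by
    intro h0
    apply hlij
    rw [← hcoeff, h0]; simp
  have hcard : S.card ≤ (h i j).natDegree := by
    refine Polynomial.card_le_degree_of_subset_roots (p := h i j) ?_
    intro a ha
    rw [Polynomial.mem_roots hne]
    exact hroot a ha i j
  have hlead : c ((h i j).natDegree, i, j) ≠ 0 := by
    rw [← hcoeff]
    exact Polynomial.leadingCoeff_ne_zero.2 hne
  refine le_trans ?_ (hcwt _ hlead)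
  simp only [wt]
  calc d * Q * S.card ≤ d * Q * (h i j).natDegree := Nat.mul_le_mul_left _ hcard
    _ ≤ _ := by rw [add_assoc]; exact Nat.le_add_right _ _


lemma st_class (K : Type) [Field K] [Fintype K] (p : ℕ) [Fact p.Prime] [CharP K p] (s r Q M d G : ℕ)
    (hs : 0 < s) (hQ : Q = p ^ s) (hMQ : M = Q ^ r) (hN : Fintype.card K = M ^ 2)
    (hdQ : d + 1 = Q) (hG : G * d = M ^ 2 - 1) (u v ζ η : K) (hu : u ≠ 0) (κ : ℕ)
    (hκ : κ = Q * Q * d + d * (Q + 1) * Q) (hM : 2 * κ + 3 < M) (S : Finset K)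
    (hS : ∀ x ∈ S, x ≠ 0 ∧ x + x⁻¹ ≠ 0 ∧ (x + x⁻¹) ^ G = ζ ∧
      ∑ i ∈ Finset.range (2 * r), (u * x + v * x⁻¹) ^ (Q ^ i) = η) :
    d * Q * S.card ≤ M ^ 2 + (3 * κ + 3) * M :=
  st_class0 (AlgebraicClosure K) K p s r Q M d G hs hQ hMQ hN hdQ hG u v ζ η hu κ hκ hM S hS

lemma st_sum {E K : Type} [Field E] [Fintype E] [Field K] [Fintype K] [Algebra E K]
    (r Q d κ : ℕ) (hQ : Fintype.card E = Q) (hr : Module.finrank E K = 2 * r) (hdQ : d + 1 = Q)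
    (hκ : κ = Q * Q * d + d * (Q + 1) * Q) (hM : 2 * κ + 3 < Q ^ r) (u v : E) (hu : u ≠ 0)
    (F : E → E → ℂ) (hF0 : ∀ η, F 0 η = 0) (hF1 : ∀ ζ η, ‖F ζ η‖ ≤ 1)
    (hFs : ∑ ζ, ∑ η, F ζ η = 0) :
    ‖∑ x : K, F (Algebra.norm E (x + x⁻¹))
      (Algebra.trace E K (algebraMap E K u * x + algebraMap E K v * x⁻¹))‖ ≤
      (6 * κ + 9) * (Q : ℝ) ^ r := by
  classical
  obtain ⟨p, hp⟩ := CharP.exists E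
  have hpp : p.Prime := CharP.char_is_prime E p
  have : Fact p.Prime := ⟨hpp⟩
  have : CharP K p := charP_of_injective_algebraMap (algebraMap E K).injective p
  obtain ⟨s, -, hs⟩ := FiniteField.card E p
  set M := Q ^ r with hMdef
  have hN : Fintype.card K = M ^ 2 := by
    rw [Module.card_eq_pow_finrank (K := E), hr, hQ, hMdef, ← pow_mul, mul_comm]
  have hQ1 : 1 < Q := hQ ▸ Fintype.one_lt_card
  have hd : 0 < d := by omega
  set G := (M ^ 2 - 1) / d with hGdef
  have hG : G * d = M ^ 2 - 1 := by
    apply Nat.div_mul_cancel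
    have := Nat.sub_dvd_pow_sub_pow Q 1 (r * 2)
    rw [one_pow, pow_mul] at this
    rwa [show d = Q - 1 by omega]
  let φ : K → E × E := fun x => (Algebra.norm E (x + x⁻¹),
      Algebra.trace E K (algebraMap E K u * x + algebraMap E K v * x⁻¹))
  let I : Finset (E × E) := (Finset.univ.filter (· ≠ 0)) ×ˢ Finset.univ
  let T : Finset K := Finset.univ.filter (fun x => x + x⁻¹ ≠ 0)
  have hmaps : ∀ x ∈ T, φ x ∈ I := by
    intro x hx
    simp only [T, Finset.mem_filter, Finset.mem_univ, true_and] at hx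
    simp [I, φ, Algebra.norm_eq_zero_iff, hx]
  have hIcard : I.card = d * Q := by
    simp only [I, Finset.card_product, Finset.card_univ, hQ]
    rw [Finset.filter_ne' , Finset.card_erase_of_mem (Finset.mem_univ _), Finset.card_univ, hQ]
    congr 1; omega
  let N : E × E → ℕ := fun c => (T.filter (fun x => φ x = c)).card
  have hNle : ∀ c, d * Q * N c ≤ M ^ 2 + (3 * κ + 3) * M := by
    rintro ⟨ζ, η⟩
    refine st_class K p s r Q M d G s.pos (hQ ▸ hs) rfl hN hdQ hG (algebraMap E K u)
      (algebraMap E K v) (algebraMap E K ζ) (algebraMap E K η) (by simpa using hu) κ hκ hM _ ?_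
    intro x hx
    simp only [T, φ, Finset.mem_filter, Finset.mem_univ, true_and, Prod.mk.injEq] at hx
    obtain ⟨hx1, hx2, hx3⟩ := hx
    refine ⟨?_, hx1, ?_, ?_⟩
    · rintro rfl; simp at hx1
    · rw [← hx2, FiniteField.algebraMap_norm_eq_pow, Nat.card_eq_fintype_card,
        Nat.card_eq_fintype_card, hN, hQ, hGdef]
      congr 2; omega
    · rw [← hx3, FiniteField.algebraMap_trace_eq_sum_pow, hr, Nat.card_eq_fintype_card, hQ]
  have hT : M ^ 2 ≤ T.card + 3 := by
    have h1 : (Finset.univ.filter (fun x : K => ¬ (x + x⁻¹ ≠ 0))).card ≤ 3 := by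
      let P : Polynomial K := Polynomial.X ^ 3 + Polynomial.X
      have hdeg : P.natDegree = 3 := by simp only [P]; compute_degree!
      have hP0 : P ≠ 0 := by intro h; rw [h] at hdeg; simp at hdeg
      rw [← hdeg]
      refine Polynomial.card_le_degree_of_subset_roots (p := P) ?_
      intro x hx
      rw [Polynomial.mem_roots hP0]
      have hx : x + x⁻¹ = 0 := by simpa using hx
      by_cases h0 : x = 0
      · simp [P, h0, Polynomial.IsRoot]
      · have : x ^ 3 + x = x ^ 2 * (x + x⁻¹) := by field_simp
        simp [P, Polynomial.IsRoot, this, hx]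
    have h2 := Finset.card_filter_add_card_filter_not (s := (Finset.univ : Finset K)) (fun x => x + x⁻¹ ≠ 0)
    rw [Finset.card_univ, hN] at h2
    simp only [T]
    omega
  have hTN : T.card = ∑ c ∈ I, N c := Finset.card_eq_sum_card_fiberwise hmaps
  have hsum : ∑ x : K, F (Algebra.norm E (x + x⁻¹))
      (Algebra.trace E K (algebraMap E K u * x + algebraMap E K v * x⁻¹)) =
      ∑ c ∈ I, (N c : ℂ) * F c.1 c.2 := by
    have h1 : ∑ x : K, F (φ x).1 (φ x).2 = ∑ x ∈ T, F (φ x).1 (φ x).2 := by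
      symm
      refine Finset.sum_subset (Finset.subset_univ _) ?_
      intro x _ hx
      have hx : x + x⁻¹ = 0 := by simpa [T] using hx
      simp [φ, hx, hF0]
    refine h1.trans ?_
    rw [← Finset.sum_fiberwise_of_maps_to hmaps]
    refine Finset.sum_congr rfl fun c _ => ?_
    rw [Finset.sum_congr rfl (g := fun _ => F c.1 c.2)]
    · simp [N]
    · intro x hx
      rw [(Finset.mem_filter.1 hx).2]
  have hF0s : ∑ c ∈ I, F c.1 c.2 = 0 := by
    rw [← hFs, ← Finset.sum_product', ]
    refine Finset.sum_subset (Finset.subset_univ _) ?_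
    rintro ⟨ζ, η⟩ _ hx
    have hx : ζ = 0 := by simpa [I] using hx
    simp [hx, hF0]
  let δ : E × E → ℝ := fun c => (d * Q : ℝ) * N c - (M : ℝ) ^ 2
  have hδ1 : ∀ c, δ c ≤ (3 * κ + 3) * M := by
    intro c
    have : ((d * Q * N c : ℕ) : ℝ) ≤ ((M ^ 2 + (3 * κ + 3) * M : ℕ) : ℝ) := by exact_mod_cast hNle c
    push_cast at this
    simp only [δ]; linarith
  have hM1 : (1 : ℝ) ≤ M := by
    have : 1 ≤ M := by omega
    exact_mod_cast this
  have hD0 : (0 : ℝ) < d * Q := by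
    have : 0 < d * Q := by positivity
    exact_mod_cast this
  have hδs : -(3 * (d * Q : ℝ)) ≤ ∑ c ∈ I, δ c := by
    simp only [δ, Finset.sum_sub_distrib, ← Finset.mul_sum, Finset.sum_const, nsmul_eq_mul, hIcard]
    rw [← Nat.cast_sum, ← hTN]
    have : ((M ^ 2 : ℕ) : ℝ) ≤ ((T.card + 3 : ℕ) : ℝ) := by exact_mod_cast hT
    push_cast at this ⊢
    nlinarith
  have hkey : ((d * Q : ℝ) : ℂ) * ∑ c ∈ I, (N c : ℂ) * F c.1 c.2 = ∑ c ∈ I, (δ c : ℂ) * F c.1 c.2 := by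
    simp only [δ]
    push_cast
    simp only [sub_mul, Finset.sum_sub_distrib, ← Finset.mul_sum, hF0s, mul_zero, sub_zero]
    rw [Finset.mul_sum]
    refine Finset.sum_congr rfl fun c _ => by ring
  have hbd : ‖∑ c ∈ I, (δ c : ℂ) * F c.1 c.2‖ ≤ (d * Q : ℝ) * ((6 * κ + 9) * M) := by
    calc _ ≤ ∑ c ∈ I, ‖(δ c : ℂ) * F c.1 c.2‖ := norm_sum_le _ _
      _ ≤ ∑ c ∈ I, (2 * ((3 * κ + 3) * M) - δ c) := by
        refine Finset.sum_le_sum fun c _ => ?_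
        rw [norm_mul, Complex.norm_real, Real.norm_eq_abs]
        have h1 : |δ c| ≤ 2 * ((3 * κ + 3) * M) - δ c := by
          rw [abs_le]
          have h2 : (0 : ℝ) ≤ (3 * κ + 3) * M := by positivity
          constructor <;> linarith [hδ1 c]
        exact (mul_le_of_le_one_right (abs_nonneg _) (hF1 _ _)).trans h1
      _ = (d * Q : ℝ) * (2 * ((3 * κ + 3) * M)) - ∑ c ∈ I, δ c := by
        rw [Finset.sum_sub_distrib, Finset.sum_const, hIcard]; simp
      _ ≤ (d * Q : ℝ) * (2 * ((3 * κ + 3) * M)) + 3 * (d * Q : ℝ) := by linarith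
      _ ≤ _ := by nlinarith
  rw [hsum]
  rw [← hkey, norm_mul, Complex.norm_real, Real.norm_of_nonneg hD0.le] at hbd
  have := le_of_mul_le_mul_left hbd hD0
  simpa [hMdef] using this

lemma st_bound {E : Type} [Field E] [Fintype E] (χ : MulChar E ℂ) (ψ : AddChar E ℂ) (hψ : ψ ≠ 1)
    (u v : E) (huv : χ ≠ 1 ∨ u ≠ 0 ∨ v ≠ 0) :
    ∃ (C : ℝ) (r0 : ℕ), ∀ r, r0 ≤ r → ∀ (K : Type) [Field K] [Fintype K] [Algebra E K],
      Module.finrank E K = 2 * r →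
      ‖∑ x : K, χ (Algebra.norm E (x + x⁻¹)) *
        ψ (Algebra.trace E K (algebraMap E K u * x + algebraMap E K v * x⁻¹))‖ ≤
        C * (Fintype.card E : ℝ) ^ r := by
  classical
  set Q := Fintype.card E with hQ
  have hQ1 : 1 < Q := Fintype.one_lt_card
  obtain ⟨d, hd⟩ : ∃ d, d + 1 = Q := ⟨Q - 1, by omega⟩
  obtain ⟨κ, hκ⟩ : ∃ κ, κ = Q * Q * d + d * (Q + 1) * Q := ⟨_, rfl⟩
  have hχ1 : ∀ a, ‖χ a‖ ≤ 1 := fun a => by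
    by_cases ha : IsUnit a
    · rw [show χ a = χ ((ha.unit : Eˣ) : E) from rfl, ← MulChar.coe_toUnitHom]
      have h : (χ.toUnitHom ha.unit) ^ Fintype.card Eˣ = 1 := by rw [← map_pow, pow_card_eq_one, map_one]
      have h2 := congrArg (fun z : ℂˣ => ‖(z : ℂ)‖) h
      simp only [Units.val_pow_eq_pow_val, norm_pow, Units.val_one, norm_one] at h2
      exact (pow_le_one_iff_of_nonneg (norm_nonneg _) Fintype.card_ne_zero).1 h2.le
    · rw [MulChar.map_nonunit χ ha]; simp
  have hψ1 : ∀ a, ‖ψ a‖ = 1 := fun a => AddChar.norm_apply ψ a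
  have hψs : ∑ a, ψ a = 0 := AddChar.sum_eq_zero_of_ne_one hψ
  have main : ∀ u v : E, u ≠ 0 → ∀ r, 2 * κ + 3 ≤ r → ∀ (K : Type) [Field K] [Fintype K] [Algebra E K],
      Module.finrank E K = 2 * r →
      ‖∑ x : K, χ (Algebra.norm E (x + x⁻¹)) *
        ψ (Algebra.trace E K (algebraMap E K u * x + algebraMap E K v * x⁻¹))‖ ≤
        (6 * κ + 9) * (Q : ℝ) ^ r := by
    intro u v hu r hr K _ _ _ hK
    refine st_sum (K := K) r Q d κ rfl hK hd hκ (hr.trans_lt (Nat.lt_pow_self hQ1)) u v hu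
      (fun ζ η => χ ζ * ψ η) ?_ ?_ ?_
    · intro η; simp [MulChar.map_zero]
    · intro ζ η; rw [norm_mul, hψ1, mul_one]; exact hχ1 ζ
    · simp [← Finset.mul_sum, hψs]
  refine ⟨6 * κ + 9, 2 * κ + 3, fun r hr K _ _ _ hK => ?_⟩
  by_cases hu : u = 0
  · by_cases hv : v = 0
    · have hχ : χ ≠ 1 := by simpa [hu, hv] using huv
      have := st_sum (K := K) r Q d κ rfl hK hd hκ (hr.trans_lt (Nat.lt_pow_self hQ1)) 1 0 one_ne_zero
        (fun ζ η => χ ζ) (by simp [MulChar.map_zero]) (fun ζ _ => hχ1 ζ) (by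
          rw [Finset.sum_comm]; simp [MulChar.sum_eq_zero_of_ne_one hχ])
      simpa [hu, hv] using this
    · have := main v u hv r hr K hK
      rw [← Equiv.sum_comp (Equiv.inv K)] at this
      simp only [Equiv.inv_apply, inv_inv] at this
      simpa only [add_comm] using this
  · exact main u v hu r hr K hK

lemma ps_bound {ι : Type*} [Fintype ι] (β : ι → ℂ) (C : ℝ) (r0 : ℕ)
    (h : ∀ r, r0 ≤ r → ‖∑ i, β i ^ r‖ ≤ C) (i0 : ι) : ‖β i0‖ ≤ 1 := by
  by_contra! hgt
  let z : ι → Circle := fun i => Circle.exp (β i).arg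
  have hz : ∀ i, β i = ‖β i‖ * (z i : ℂ) := fun i => by
    simp only [z, Circle.coe_exp]; exact (Complex.norm_mul_exp_arg_mul_I _).symm
  have h1 := mapClusterPt_one_atTop_pow z
  have h2 : ∀ᶠ y : ι → Circle in nhds 1, ∀ i, 1 / 2 < ((y i : ℂ)).re := by
    rw [Filter.eventually_all]
    intro i
    have hc : Continuous fun y : ι → Circle => ((y i : ℂ)).re := by fun_prop
    exact hc.continuousAt.eventually (lt_mem_nhds (by simp; norm_num))
  have h3 := h1.frequently h2
  have h4 := (tendsto_pow_atTop_atTop_of_one_lt hgt).eventually_gt_atTop (2 * C)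
  obtain ⟨r, ⟨hr1, hr2⟩, hr3⟩ := ((h3.and_eventually h4).and_eventually
    (Filter.eventually_ge_atTop r0)).exists
  have h5 := h r hr3
  have h6 : ∀ i, (β i ^ r).re = ‖β i‖ ^ r * ((z i ^ r : Circle) : ℂ).re := by
    intro i
    conv_lhs => rw [hz i, mul_pow, ← Complex.ofReal_pow, Complex.re_ofReal_mul]
    simp
  have h7 : ∀ i, 0 ≤ (β i ^ r).re := by
    intro i; rw [h6]
    have := hr1 i
    simp only [Pi.pow_apply] at this
    positivity
  have h8 : (β i0 ^ r).re ≤ (∑ i, β i ^ r).re := by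
    rw [Complex.re_sum]
    exact Finset.single_le_sum (f := fun i => (β i ^ r).re) (fun i _ => h7 i) (Finset.mem_univ i0)
  have h9 : C < (β i0 ^ r).re := by
    rw [h6]
    have := hr1 i0
    simp only [Pi.pow_apply] at this
    have h0 : 0 < ‖β i0‖ ^ r := by positivity
    nlinarith
  linarith [Complex.re_le_norm (∑ i, β i ^ r)]

lemma ps_main (c S : ℕ → ℂ) (hc0 : c 0 = 1) (hc : ∀ m, 5 ≤ m → c m = 0)
    (hrec : ∀ m : ℕ, (m : ℂ) * c m = ∑ i ∈ Finset.range m, c i * S (m - i))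
    (Q : ℝ) (hQ : 0 < Q) (C : ℝ) (r0 : ℕ) (hS : ∀ r, r0 ≤ r → ‖S (2 * r)‖ ≤ C * Q ^ r) :
    ‖S 1‖ ≤ 4 * √Q := by
  classical
  -- the roots
  obtain ⟨α, hα⟩ : ∃ α : Fin 4 → ℂ, ∀ m, c m = (-1) ^ m *
      MvPolynomial.aeval α (MvPolynomial.esymm (Fin 4) ℂ m) := by
    let P : Polynomial ℂ := ∑ m ∈ Finset.range 5, Polynomial.monomial (4 - m) (c m)
    have hPc : ∀ m, m ≤ 4 → P.coeff (4 - m) = c m := by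
      intro m hm
      simp only [P, Polynomial.finsetSum_coeff, Polynomial.coeff_monomial]
      rw [Finset.sum_eq_single m]
      · simp
      · intro b hb hbm
        rw [Finset.mem_range] at hb
        rw [if_neg (by omega)]
      · intro h; simp at h; omega
    have hdeg : P.natDegree = 4 := by
      refine Polynomial.natDegree_eq_of_le_of_coeff_ne_zero ?_ ?_
      · refine Polynomial.natDegree_sum_le_of_forall_le _ _ fun m _ => ?_
        exact (Polynomial.natDegree_monomial_le _).trans (by omega)
      · have := hPc 0 (by omega)
        simp [this, hc0]
    have hlead : P.leadingCoeff = 1 := by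
      rw [Polynomial.leadingCoeff, hdeg]; simpa [hc0] using hPc 0 (by omega)
    have hcard : P.roots.card = 4 := by
      rw [← (IsAlgClosed.splits P).natDegree_eq_card_roots, hdeg]
    obtain ⟨l, hl⟩ := Quot.exists_rep P.roots
    have hl' : (l : Multiset ℂ) = P.roots := hl
    have hlen : l.length = 4 := by rw [← hcard, ← hl']; simp
    refine ⟨fun i => l.get (i.cast hlen.symm), fun m => ?_⟩
    rw [MvPolynomial.aeval_esymm_eq_multiset_esymm]
    have hroots : Multiset.map (fun i : Fin 4 => l.get (i.cast hlen.symm)) Finset.univ.val = P.roots := by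
      rw [← hl', Fin.univ_val_map]
      congr 1
      apply List.ext_get
      · simp [hlen]
      · intro n h1 h2; simp only [List.get_eq_getElem, List.getElem_ofFn, Fin.val_cast]
    rw [hroots]
    by_cases hm : m ≤ 4
    · rw [← hPc m hm, Polynomial.coeff_eq_esymm_roots_of_card (by rw [hcard, hdeg]) (by omega), hlead,
        hdeg, one_mul, show 4 - (4 - m) = m by omega]
    · rw [hc m (by omega), Multiset.esymm, Multiset.powersetCard_eq_empty _ (by omega)]; simp
  have hnewton : ∀ m : ℕ, (m : ℂ) * c m = ∑ i ∈ Finset.range m, c i * (- ∑ j, α j ^ (m - i)) := by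
    intro m
    have h := congrArg (MvPolynomial.aeval α) (MvPolynomial.mul_esymm_eq_sum (Fin 4) ℂ m)
    simp only [map_mul, map_natCast, map_pow, map_neg, map_one, map_sum, MvPolynomial.psum,
      MvPolynomial.aeval_X] at h
    rw [hα m, mul_left_comm, h, ← mul_assoc, ← pow_add, show m + (m + 1) = 2 * m + 1 by ring, pow_succ,
      pow_mul]
    simp only [← hα, neg_one_sq, one_pow, one_mul, neg_mul, mul_neg]
    rw [← Finset.sum_neg_distrib]
    refine Finset.sum_bij' (fun a _ => a.1) (fun i _ => (i, m - i)) ?_ ?_ ?_ ?_ ?_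
    · intro a ha; simp at ha; simp [ha.2]
    · intro i hi; simp at hi; simp; omega
    · rintro ⟨a, b⟩ ha; simp at ha ⊢; omega
    · intro i hi; rfl
    · rintro ⟨a, b⟩ ha
      simp at ha
      have hb : m - a = b := by omega
      simp only [hb]
  have hSp : ∀ m, 0 < m → S m = - ∑ j, α j ^ m := by
    intro m
    induction m using Nat.strong_induction_on with
    | _ m ih =>
      intro hm
      obtain ⟨k, rfl⟩ : ∃ k, m = k + 1 := ⟨m - 1, by omega⟩
      have h1 := (hrec (k + 1)).symm.trans (hnewton (k + 1))
      rw [Finset.sum_range_succ', Finset.sum_range_succ'] at h1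
      rw [Finset.sum_congr rfl (g := fun i => c (i + 1) * (-∑ j, α j ^ (k + 1 - (i + 1))))] at h1
      · simpa [hc0] using h1
      · intro i hi
        rw [Finset.mem_range] at hi
        rw [ih _ (by omega) (by omega)]
  have hαle : ∀ i, ‖α i‖ ≤ √Q := by
    intro i
    have h := ps_bound (fun i => α i ^ 2 / (Q : ℂ)) C (r0 + 1) (fun r hr => ?_) i
    · rw [norm_div, norm_pow, Complex.norm_real, Real.norm_of_nonneg hQ.le, div_le_one hQ] at h
      exact Real.le_sqrt_of_sq_le h
    · have h1 := hS r (by omega)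
      rw [hSp _ (by omega), norm_neg] at h1
      simp only [div_pow, ← pow_mul, ← Finset.sum_div]
      rw [norm_div, norm_pow, Complex.norm_real, Real.norm_of_nonneg hQ.le, div_le_iff₀ (by positivity)]
      exact h1
  rw [hSp 1 one_pos, norm_neg]
  calc _ ≤ ∑ j, ‖α j ^ 1‖ := norm_sum_le _ _
    _ ≤ ∑ j : Fin 4, √Q := Finset.sum_le_sum fun j _ => by rw [pow_one]; exact hαle j
    _ = _ := by simp

open Polynomial in
noncomputable def rhoP {R : Type*} [Field R] (h : R[X]) : R :=
  (h %ₘ (X ^ 2 + 1)).coeff 0 ^ 2 + (h %ₘ (X ^ 2 + 1)).coeff 1 ^ 2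

open Polynomial in
lemma X2_monic (R : Type*) [Field R] : (X ^ 2 + 1 : R[X]).Monic := by monicity!

open Polynomial in
lemma X2_deg (R : Type*) [Field R] : (X ^ 2 + 1 : R[X]).natDegree = 2 := by compute_degree!

open Polynomial in
lemma rhoP_form {R : Type*} [Field R] (h : R[X]) : h %ₘ (X ^ 2 + 1) =
    C ((h %ₘ (X ^ 2 + 1)).coeff 0) + C ((h %ₘ (X ^ 2 + 1)).coeff 1) * X := by
  have : (h %ₘ (X ^ 2 + 1)).natDegree ≤ 1 := by
    have := natDegree_modByMonic_lt h (X2_monic R) (by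
      intro h; have := X2_deg R; rw [h] at this; simp at this)
    rw [X2_deg] at this; omega
  conv_lhs => rw [eq_X_add_C_of_natDegree_le_one this]
  ring

open Polynomial in
lemma rhoP_of {R : Type*} [Field R] (h : R[X]) (a b : R) (g : R[X])
    (e : h = C a + C b * X + (X ^ 2 + 1) * g) : rhoP h = a ^ 2 + b ^ 2 := by
  have : h %ₘ (X ^ 2 + 1) = C a + C b * X := by
    refine (div_modByMonic_unique g _ (X2_monic R) ⟨e.symm, ?_⟩).2
    rw [degree_eq_natDegree (X2_monic R).ne_zero, X2_deg]
    refine (degree_le_of_natDegree_le (n := 1) (by compute_degree)).trans_lt (by norm_num)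
  rw [rhoP, this]
  simp [coeff_X, coeff_C]

open Polynomial in
lemma rhoP_mul {R : Type*} [Field R] (g h : R[X]) : rhoP (g * h) = rhoP g * rhoP h := by
  have hg := modByMonic_add_div g (X ^ 2 + 1 : R[X])
  have hh := modByMonic_add_div h (X ^ 2 + 1 : R[X])
  rw [rhoP_form] at hg hh
  set a := (g %ₘ (X ^ 2 + 1)).coeff 0
  set b := (g %ₘ (X ^ 2 + 1)).coeff 1
  set c := (h %ₘ (X ^ 2 + 1)).coeff 0
  set d := (h %ₘ (X ^ 2 + 1)).coeff 1
  rw [rhoP_of (g * h) (a * c - b * d) (a * d + b * c) (C (b * d) + (g /ₘ (X ^ 2 + 1)) * h +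
    (C a + C b * X) * (h /ₘ (X ^ 2 + 1)))]
  · rw [rhoP, rhoP]; ring
  · simp only [C_sub, C_mul, C_add]
    linear_combination (-h) * hg - (C a + C b * X) * hh

open Polynomial in
lemma rhoP_one {R : Type*} [Field R] : rhoP (1 : R[X]) = 1 := by
  rw [rhoP_of 1 1 0 0 (by simp)]; simp

open Polynomial in
lemma rhoP_X_sub_C {R : Type*} [Field R] (a : R) : rhoP (X - C a) = a ^ 2 + 1 := by
  rw [rhoP_of (X - C a) (-a) 1 0 (by simp; ring)]; simp

open Polynomial in
lemma rhoP_map {R S : Type*} [Field R] [Field S] (f : R →+* S) (h : R[X]) :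
    rhoP (h.map f) = f (rhoP h) := by
  have := map_modByMonic f (p := h) (X2_monic R)
  simp only [Polynomial.map_add, Polynomial.map_pow, map_X, Polynomial.map_one] at this
  simp [rhoP, ← this]

open Polynomial in
lemma rhoP_add {R : Type*} [Field R] (h g : R[X]) : rhoP (h + (X ^ 2 + 1) * g) = rhoP h := by
  have hh := modByMonic_add_div h (X ^ 2 + 1 : R[X])
  rw [rhoP_form] at hh
  rw [rhoP_of (h + (X ^ 2 + 1) * g) _ _ (h /ₘ (X ^ 2 + 1) + g)]
  · rw [rhoP]
  · conv_lhs => rw [← hh]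
    ring

/-- local factor -/
noncomputable def lamP {E : Type*} [Field E] (χ : MulChar E ℂ) (ψ : AddChar E ℂ) (u v : E)
    (h : Polynomial E) : ℂ :=
  χ (rhoP h * ((-1) ^ h.natDegree * h.coeff 0)⁻¹) *
    ψ (-(u * h.nextCoeff + v * (h.coeff 1 / h.coeff 0)))

open Polynomial in
lemma lamP_mul {E : Type*} [Field E] (χ : MulChar E ℂ) (ψ : AddChar E ℂ) (u v : E)
    (g h : Polynomial E) (hg : g.Monic) (hh : h.Monic) :
    lamP χ ψ u v (g * h) = lamP χ ψ u v g * lamP χ ψ u v h := by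
  by_cases h0 : h.coeff 0 = 0
  · simp [lamP, h0, mul_coeff_zero, MulChar.map_zero]
  by_cases g0 : g.coeff 0 = 0
  · simp [lamP, g0, mul_coeff_zero, MulChar.map_zero]
  simp only [lamP]
  rw [hg.natDegree_mul hh, hg.nextCoeff_mul hh, rhoP_mul, mul_coeff_zero, mul_coeff_one]
  rw [mul_mul_mul_comm (χ _), ← map_mul, ← AddChar.map_add_eq_mul]
  congr 2
  · rw [pow_add]; simp only [mul_inv]; ring
  · field_simp; ring

open Polynomial in
lemma lamP_one {E : Type*} [Field E] (χ : MulChar E ℂ) (ψ : AddChar E ℂ) (u v : E) :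
    lamP χ ψ u v (1 : E[X]) = 1 := by
  simp [lamP, rhoP_one, coeff_one, nextCoeff]

open Polynomial in
lemma pi_map {E K : Type*} [Field E] [Finite E] [Field K] [Finite K] [Algebra E K] (α : K) :
    ((minpoly E α) ^ (Module.finrank E K / (minpoly E α).natDegree)).map (algebraMap E K) =
      ∏ g : Gal(K/E), (X - C (g α)) := by
  classical
  set R : K[X] := ∏ g : Gal(K/E), (X - C (g α)) with hR
  have hRm : R.Monic := monic_prod_of_monic _ _ fun g _ => monic_X_sub_C _
  have hRd : R.natDegree = Module.finrank E K := by
    rw [hR, natDegree_prod_of_monic _ _ fun g _ => monic_X_sub_C _]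
    simp [← Nat.card_eq_fintype_card, IsGalois.card_aut_eq_finrank]
  obtain ⟨h, hh⟩ : ∃ h : E[X], h.map (algebraMap E K) = R := by
    rw [← mem_lifts, lifts_iff_coeff_lifts]
    intro n
    rw [IsGalois.mem_range_algebraMap_iff_fixed]
    intro g
    have : R.map (g : K →+* K) = R := by
      rw [hR, Polynomial.map_prod]
      simp only [Polynomial.map_sub, map_X, map_C]
      exact Fintype.prod_equiv (Equiv.mulLeft g) _ _ (fun x => by simp)
    conv_rhs => rw [← this]
    simp
  have hinj := (algebraMap E K).injective
  have hhm : h.Monic := by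
    rw [← hh] at hRm; exact monic_of_injective hinj hRm
  have hhd : h.natDegree = Module.finrank E K := by
    rw [← hRd, ← hh, natDegree_map]
  have hIntg : IsIntegral E α := Algebra.IsIntegral.isIntegral α
  have hdvd : h ∣ (minpoly E α) ^ (Fintype.card Gal(K/E)) := by
    rw [← map_dvd_map' (algebraMap E K), hh, Polynomial.map_pow, hR, ← Finset.card_univ, ← Finset.prod_const]
    refine Finset.prod_dvd_prod_of_dvd _ _ fun g _ => ?_
    rw [dvd_iff_isRoot, IsRoot, eval_map_algebraMap]
    have := Polynomial.aeval_algHom_apply (g : K →ₐ[E] K) α (minpoly E α)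
    simpa using this
  obtain ⟨i, -, hi⟩ := (dvd_prime_pow (minpoly.prime hIntg) _).1 hdvd
  have hi' : h = minpoly E α ^ i :=
    eq_of_monic_of_associated hhm ((minpoly.monic hIntg).pow i) hi
  have hpos := minpoly.natDegree_pos hIntg
  have hi2 : Module.finrank E K / (minpoly E α).natDegree = i := by
    rw [← hhd, hi', natDegree_pow, Nat.mul_div_cancel _ hpos]
  rw [hi2, ← hi', hh]

open Polynomial in
lemma mu_prod {K ι : Type*} [Field K] (s : Finset ι) (a : ι → K) (ha : ∀ i ∈ s, a i ≠ 0) :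
    (∏ i ∈ s, (X - C (a i))).coeff 1 / (∏ i ∈ s, (X - C (a i))).coeff 0 = - ∑ i ∈ s, (a i)⁻¹ ∧
    (∏ i ∈ s, (X - C (a i))).coeff 0 ≠ 0 := by
  classical
  induction s using Finset.induction_on with
  | empty => simp [coeff_one]
  | insert i s hi ih =>
    obtain ⟨h1, h2⟩ := ih (fun j hj => ha j (Finset.mem_insert_of_mem hj))
    have hi0 := ha i (Finset.mem_insert_self _ _)
    rw [Finset.prod_insert hi, Finset.sum_insert hi, mul_coeff_zero, mul_coeff_one]
    refine ⟨?_, mul_ne_zero (by simpa using hi0) h2⟩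
    rw [neg_add, ← h1]
    simp [coeff_X, coeff_C]
    field_simp
    ring

open Polynomial in
lemma rho_prod {K ι : Type*} [Field K] (s : Finset ι) (a : ι → K) :
    rhoP (∏ i ∈ s, (X - C (a i))) = ∏ i ∈ s, (a i ^ 2 + 1) := by
  classical
  induction s using Finset.induction_on with
  | empty => simp [rhoP_one]
  | insert i s hi ih => rw [Finset.prod_insert hi, Finset.prod_insert hi, rhoP_mul, ih, rhoP_X_sub_C]

open Polynomial in
lemma lamP_pi {E K : Type*} [Field E] [Finite E] [Field K] [Finite K] [Algebra E K]
    (χ : MulChar E ℂ) (ψ : AddChar E ℂ) (u v : E) (α : K) :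
    lamP χ ψ u v ((minpoly E α) ^ (Module.finrank E K / (minpoly E α).natDegree)) =
      χ (Algebra.norm E (α + α⁻¹)) *
        ψ (Algebra.trace E K (algebraMap E K u * α + algebraMap E K v * α⁻¹)) := by
  classical
  have hpi := pi_map (E := E) α
  set h := (minpoly E α) ^ (Module.finrank E K / (minpoly E α).natDegree) with hh
  have hinj := (algebraMap E K).injective
  have hm : h.Monic := (minpoly.monic (Algebra.IsIntegral.isIntegral α)).pow _
  have hdeg : h.natDegree = Fintype.card Gal(K/E) := by
    rw [← natDegree_map (algebraMap E K), hpi, natDegree_prod_of_monic _ _ fun g _ => monic_X_sub_C _]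
    simp
  have h0 : algebraMap E K ((-1) ^ h.natDegree * h.coeff 0) = ∏ g : Gal(K/E), g α := by
    rw [map_mul, ← coeff_map, hpi, hdeg, coeff_zero_eq_eval_zero, eval_prod]
    simp only [eval_sub, eval_X, eval_C, zero_sub, map_pow, map_neg, map_one]
    rw [Finset.prod_neg, ← mul_assoc, ← pow_add, Finset.card_univ, ← two_mul, pow_mul]
    simp
  by_cases hα : α = 0
  · have : h.coeff 0 = 0 := by
      have h1 : ∏ g : Gal(K/E), g α = 0 := Finset.prod_eq_zero (Finset.mem_univ 1) (by simp [hα])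
      rw [h1] at h0
      simpa using h0
    simp [lamP, this, hα, MulChar.map_zero]
  have hα' : ∀ g : Gal(K/E), g α ≠ 0 := fun g => by simpa using hα
  rw [lamP]
  congr 2
  · apply hinj
    rw [Algebra.norm_eq_prod_automorphisms, map_mul, map_inv₀, h0, ← rhoP_map, hpi, rho_prod,
      ← Finset.prod_inv_distrib, ← Finset.prod_mul_distrib]
    refine Finset.prod_congr rfl fun g _ => ?_
    have := hα' g
    simp only [map_add, map_inv₀]
    field_simp
  · apply hinj
    have hnc : algebraMap E K h.nextCoeff = - ∑ g : Gal(K/E), g α := by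
      rw [← nextCoeff_map hinj, hpi, prod_X_sub_C_nextCoeff]
    have hmu := (mu_prod Finset.univ (fun g : Gal(K/E) => g α) (fun g _ => hα' g)).1
    rw [← hpi, coeff_map, coeff_map] at hmu
    rw [trace_eq_sum_automorphisms]
    simp only [map_add, map_mul, map_inv₀, AlgEquiv.commutes, Finset.sum_add_distrib, ← Finset.mul_sum,
      map_neg, map_div₀, hnc, hmu]
    ring

open Polynomial in
lemma monics_finite (E : Type*) [Field E] [Finite E] (m : ℕ) :
    {h : E[X] | h.Monic ∧ h.natDegree = m}.Finite := by
  refine Set.Finite.of_injOn (f := fun (h : E[X]) (i : Fin m) => h.coeff i) (t := Set.univ)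
    (fun _ _ => Set.mem_univ _) ?_ Set.finite_univ
  rintro g ⟨hg1, hg2⟩ h ⟨hh1, hh2⟩ he
  ext n
  rcases lt_trichotomy n m with hn | hn | hn
  · exact congrFun he ⟨n, hn⟩
  · subst hn
    rw [← hg2, hg1.coeff_natDegree, hg2, ← hh2, hh1.coeff_natDegree]
  · rw [coeff_eq_zero_of_natDegree_lt (by omega), coeff_eq_zero_of_natDegree_lt (by omega)]

/-- monic polynomials of degree `m` -/
noncomputable def monics (E : Type*) [Field E] [Finite E] (m : ℕ) : Finset (Polynomial E) :=
  (monics_finite E m).toFinset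

open Polynomial in
lemma mem_monics {E : Type*} [Field E] [Finite E] {m : ℕ} {h : E[X]} :
    h ∈ monics E m ↔ h.Monic ∧ h.natDegree = m := by
  simp [monics]

noncomputable def cP {E : Type*} [Field E] [Finite E] (χ : MulChar E ℂ) (ψ : AddChar E ℂ) (u v : E)
    (m : ℕ) : ℂ := ∑ h ∈ monics E m, lamP χ ψ u v h

lemma cP_zero_one {E : Type*} [Field E] [Finite E] (χ : MulChar E ℂ) (ψ : AddChar E ℂ) (u v : E) :
    cP χ ψ u v 0 = 1 := by
  have : monics E 0 = {1} := by
    ext h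
    rw [mem_monics, Finset.mem_singleton]
    constructor
    · rintro ⟨h1, h2⟩; exact h1.natDegree_eq_zero.1 h2
    · rintro rfl; simp
  rw [cP, this, Finset.sum_singleton, lamP_one]

open Polynomial in
lemma cP_shift {E : Type*} [Field E] [Finite E] (χ : MulChar E ℂ) (ψ : AddChar E ℂ) (u v : E)
    (m : ℕ) (T : E[X] → E[X]) (hT : ∀ h ∈ monics E m, T h ∈ monics E m)
    (hinj : ∀ g h, T g = T h → g = h) (w : ℂ) (hw : w ≠ 1)
    (hlam : ∀ h ∈ monics E m, lamP χ ψ u v (T h) = w * lamP χ ψ u v h) : cP χ ψ u v m = 0 := by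
  have h1 : cP χ ψ u v m = w * cP χ ψ u v m := by
    have h2 : (∑ h ∈ monics E m, lamP χ ψ u v (T h)) = ∑ h ∈ monics E m, lamP χ ψ u v h := by
      refine Finset.sum_nbij T hT (fun g _ h _ e => hinj g h e) ?_ (fun _ _ => rfl)
      exact Finset.surjOn_of_injOn_of_card_le T hT (fun g _ h _ e => hinj g h e) le_rfl
    rw [cP, Finset.mul_sum, ← h2]
    exact Finset.sum_congr rfl hlam
  have h2 : (1 - w) * cP χ ψ u v m = 0 := by linear_combination h1
  rcases mul_eq_zero.1 h2 with h | h
  · exact absurd (sub_eq_zero.1 h).symm hw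
  · exact h

open Polynomial in
lemma monics_add {E : Type*} [Field E] [Finite E] (m : ℕ) (h δ : E[X]) (hh : h ∈ monics E m)
    (hδ : δ.natDegree < m) : h + δ ∈ monics E m := by
  rw [mem_monics] at hh ⊢
  obtain ⟨h1, h2⟩ := hh
  refine ⟨h1.add_of_left ?_, ?_⟩
  · exact degree_lt_degree (h2 ▸ hδ)
  · rw [natDegree_add_eq_left_of_natDegree_lt (h2 ▸ hδ), h2]

open Polynomial in
lemma lamP_add {E : Type*} [Field E] [Finite E] (χ : MulChar E ℂ) (ψ : AddChar E ℂ) (u v : E)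
    (m : ℕ) (hm : 0 < m) (h g : E[X]) (hh : h ∈ monics E m) (hδ : ((X ^ 2 + 1) * g).natDegree < m) :
    lamP χ ψ u v (h + (X ^ 2 + 1) * g) =
    χ (rhoP h * ((-1) ^ h.natDegree * (h.coeff 0 + ((X ^ 2 + 1) * g).coeff 0))⁻¹) *
    ψ (-(u * (h.nextCoeff + ((X ^ 2 + 1) * g).coeff (m - 1)) +
      v * ((h.coeff 1 + ((X ^ 2 + 1) * g).coeff 1) / (h.coeff 0 + ((X ^ 2 + 1) * g).coeff 0)))) := by
  have h2 := mem_monics.1 (monics_add m h _ hh hδ)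
  rw [mem_monics] at hh
  rw [lamP, rhoP_add, h2.2, ← hh.2, nextCoeff_of_natDegree_pos (by omega), nextCoeff_of_natDegree_pos (by omega),
    h2.2, coeff_add, coeff_add, coeff_add, hh.2]

open Polynomial in
lemma cP_vanish {E : Type*} [Field E] [Finite E] (χ : MulChar E ℂ) (ψ : AddChar E ℂ) (hψ : ψ ≠ 1)
    (u v : E) (huv : χ ≠ 1 ∨ u ≠ 0 ∨ v ≠ 0) (m : ℕ) (hm : 5 ≤ m) : cP χ ψ u v m = 0 := by
  obtain ⟨a, ha⟩ : ∃ a, ψ a ≠ 1 := AddChar.ne_one_iff.1 hψ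
  by_cases hu : u = 0
  · by_cases hv : v = 0
    · have hχ : χ ≠ 1 := by simpa [hu, hv] using huv
      obtain ⟨b, hb⟩ := (MulChar.ne_one_iff).1 hχ
      have hb0 : (b : E) ≠ 0 := b.ne_zero
      have hd : ∀ s : E, ((X ^ 2 + 1) * C s : E[X]).natDegree < m := fun s =>
        lt_of_le_of_lt (by compute_degree) (by omega : 2 < m)
      have hc0 : ∀ s : E, ((X ^ 2 + 1) * C s : E[X]).coeff 0 = s := fun s => by simp
      have hb1 : (b : E)⁻¹ ≠ 0 := inv_ne_zero hb0
      refine cP_shift χ ψ u v m (fun h => h + (X ^ 2 + 1) * C (((b : E)⁻¹ - 1) * h.coeff 0))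
        (fun h hh => monics_add m h _ hh (hd _)) ?_ _ hb ?_
      · intro g h e
        have e0 := congrArg (fun p => coeff p 0) e
        simp only [coeff_add, hc0] at e0
        have : (b : E)⁻¹ * g.coeff 0 = (b : E)⁻¹ * h.coeff 0 := by linear_combination e0
        rw [mul_left_cancel₀ hb1 this] at e
        exact add_right_cancel e
      · intro h hh
        rw [lamP_add χ ψ u v m (by omega) h _ hh (hd _), hc0, hu, hv, lamP, ← mul_assoc, ← map_mul]
        congr 2
        · rw [show h.coeff 0 + ((b : E)⁻¹ - 1) * h.coeff 0 = (b : E)⁻¹ * h.coeff 0 by ring]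
          simp only [mul_inv, inv_inv]; ring
        · simp
    · have hd : ∀ s : E, ((X ^ 2 + 1) * (C s * X) : E[X]).natDegree < m := fun s =>
        lt_of_le_of_lt (by compute_degree) (by omega : 3 < m)
      have hc0 : ∀ s : E, ((X ^ 2 + 1) * (C s * X) : E[X]).coeff 0 = 0 := fun s => by simp
      have hexp : ∀ s : E, ((X ^ 2 + 1) * (C s * X) : E[X]) = C s * X ^ 3 + C s * X := fun s => by ring
      have hc1 : ∀ s : E, ((X ^ 2 + 1) * (C s * X) : E[X]).coeff 1 = s := fun s => by
        rw [hexp]; simp [coeff_X_pow]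
      have hcm : ∀ s : E, ((X ^ 2 + 1) * (C s * X) : E[X]).coeff (m - 1) = 0 := fun s =>
        coeff_eq_zero_of_natDegree_lt (lt_of_le_of_lt (by compute_degree) (by omega : 3 < m - 1))
      refine cP_shift χ ψ u v m (fun h => h + (X ^ 2 + 1) * (C (-(a / v) * h.coeff 0) * X))
        (fun h hh => monics_add m h _ hh (hd _)) ?_ _ ha ?_
      · intro g h e
        have e0 := congrArg (fun p => coeff p 0) e
        simp only [coeff_add, hc0, add_zero] at e0
        rw [e0] at e
        exact add_right_cancel e
      · intro h hh
        rw [lamP_add χ ψ u v m (by omega) h _ hh (hd _), hc0, hc1, hcm, add_zero, lamP]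
        by_cases h0 : h.coeff 0 = 0
        · simp [h0, MulChar.map_zero]
        rw [mul_left_comm, ← AddChar.map_add_eq_mul]
        congr 2
        field_simp
        ring
  · have hexp : ∀ s : E, ((X ^ 2 + 1) * (C s * X ^ (m - 3)) : E[X]) = C s * X ^ (m - 1) + C s * X ^ (m - 3) :=
      fun s => by rw [show m - 1 = m - 3 + 2 by omega]; ring
    have hd : ∀ s : E, ((X ^ 2 + 1) * (C s * X ^ (m - 3)) : E[X]).natDegree < m := fun s => by
      rw [hexp]
      refine lt_of_le_of_lt (natDegree_add_le _ _) (max_lt ?_ ?_)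
      · exact (natDegree_C_mul_X_pow_le _ _).trans_lt (by omega)
      · exact (natDegree_C_mul_X_pow_le _ _).trans_lt (by omega)
    have hcc : ∀ (s : E) (i : ℕ), ((X ^ 2 + 1) * (C s * X ^ (m - 3)) : E[X]).coeff i =
        (if i = m - 1 then s else 0) + (if i = m - 3 then s else 0) := fun s i => by
      rw [hexp]; simp [coeff_X_pow]
    refine cP_shift χ ψ u v m (fun h => h + (X ^ 2 + 1) * (C (-(a / u)) * X ^ (m - 3)))
        (fun h hh => monics_add m h _ hh (hd _)) ?_ _ ha ?_
    · intro g h e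
      exact add_right_cancel e
    · intro h hh
      rw [lamP_add χ ψ u v m (by omega) h _ hh (hd _), hcc, hcc, hcc, if_neg (by omega), if_neg (by omega),
        if_pos rfl, if_neg (by omega), if_neg (by omega), if_neg (by omega)]
      simp only [add_zero, lamP]
      rw [mul_left_comm, ← AddChar.map_add_eq_mul]
      congr 2
      field_simp
      ring

open Polynomial in
lemma card_minpoly_eq {E K : Type*} [Field E] [Finite E] [Field K] [Fintype K] [Algebra E K]
    (P : E[X]) (hP : Irreducible P) (hPm : P.Monic) [DecidablePred fun α : K => minpoly E α = P] :
    (Finset.univ.filter (fun α : K => minpoly E α = P)).card =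
      if P.natDegree ∣ Module.finrank E K then P.natDegree else 0 := by
  classical
  have : Fintype E := Fintype.ofFinite E
  split_ifs with hd
  · have h1 := (hP.natDegree_dvd_iff_dvd_X_pow_card_pow_sub_X (n := Module.finrank E K)).1 hd
    rw [← Module.natCard_eq_pow_finrank, Nat.card_eq_fintype_card] at h1
    have := FiniteField.isSplittingField_sub K E
    have h2 := IsSplittingField.splits K (X ^ Fintype.card K - X : E[X])
    have h3 : (P.map (algebraMap E K)).Splits := by
      refine h2.of_dvd ?_ (Polynomial.map_dvd _ h1)
      simpa using FiniteField.X_pow_card_sub_X_ne_zero K (Fintype.one_lt_card (α := K))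
    rw [← card_rootSet_eq_natDegree (PerfectField.separable_of_irreducible hP) h3, ← Set.toFinset_card]
    congr 1
    ext α
    simp only [Finset.mem_filter, Finset.mem_univ, true_and, Set.mem_toFinset, mem_rootSet]
    constructor
    · rintro rfl; exact ⟨hPm.ne_zero, minpoly.aeval _ _⟩
    · rintro ⟨-, h⟩; exact (minpoly.eq_of_irreducible_of_monic hP h hPm).symm
  · rw [Finset.card_eq_zero, Finset.filter_eq_empty_iff]
    rintro α - rfl
    exact hd (minpoly.degree_dvd (Algebra.IsIntegral.isIntegral α))

lemma count_mult (e ν m : ℕ) (he : 0 < e) (h : e * ν ≤ m) :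
    ((Finset.range m).filter (fun k => e ∣ k + 1 ∧ (k + 1) / e ≤ ν)).card = ν := by
  conv_rhs => rw [← Finset.card_range ν]
  symm
  refine Finset.card_nbij' (fun j => e * (j + 1) - 1) (fun k => (k + 1) / e - 1) ?_ ?_ ?_ ?_
  · intro j hj
    simp only [Finset.coe_range, Set.mem_Iio] at hj
    have h1 : e * (j + 1) ≤ e * ν := Nat.mul_le_mul_left _ hj
    have h2 : 0 < e * (j + 1) := by positivity
    have h3 : e * (j + 1) - 1 + 1 = e * (j + 1) := by omega
    simp only [Finset.coe_filter, Finset.mem_range, Set.mem_ofPred_eq, h3, Nat.mul_div_cancel_left _ he]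
    refine ⟨by omega, dvd_mul_right _ _, hj⟩
  · intro k hk
    simp only [Finset.coe_filter, Finset.mem_range, Set.mem_ofPred_eq] at hk
    have : 0 < (k + 1) / e := Nat.div_pos (Nat.le_of_dvd (by omega) hk.2.1) he
    simp only [Finset.coe_range, Set.mem_Iio]; omega
  · intro j hj
    have h2 : 0 < e * (j + 1) := by positivity
    have h3 : e * (j + 1) - 1 + 1 = e * (j + 1) := by omega
    simp only [h3, Nat.mul_div_cancel_left _ he]; omega
  · intro k hk
    simp only [Finset.coe_filter, Finset.mem_range, Set.mem_ofPred_eq] at hk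
    have : 0 < (k + 1) / e := Nat.div_pos (Nat.le_of_dvd (by omega) hk.2.1) he
    have h2 : (k + 1) / e - 1 + 1 = (k + 1) / e := by omega
    simp only [h2, Nat.mul_div_cancel' hk.2.1]; omega

open Polynomial UniqueFactorizationMonoid in
lemma count_main {E : Type} [Field E] [Finite E] (K : ℕ → Type) [∀ k, Field (K k)]
    [∀ k, Fintype (K k)] [∀ k, Algebra E (K k)] (hK : ∀ k, Module.finrank E (K k) = k + 1)
    (m : ℕ) (h : E[X]) (hh : h ∈ monics E m)
    [∀ k, DecidablePred fun α : K k => (minpoly E α) ^ ((k + 1) / (minpoly E α).natDegree) ∣ h] :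
    ∑ k ∈ Finset.range m, (Finset.univ.filter (fun α : K k =>
      (minpoly E α) ^ ((k + 1) / (minpoly E α).natDegree) ∣ h)).card = m := by
  classical
  obtain ⟨hm, hdeg⟩ := mem_monics.1 hh
  have hne := hm.ne_zero
  set NF := normalizedFactors h with hNF
  have hmem : ∀ P, P ∈ NF ↔ Irreducible P ∧ normalize P = P ∧ P ∣ h := fun P =>
    mem_normalizedFactors_iff' hne
  have hmonic : ∀ P ∈ NF, P.Monic := by
    intro P hP
    obtain ⟨h1, h2, h3⟩ := (hmem P).1 hP
    rw [← h2]; exact monic_normalize h1.ne_zero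
  have hpow : ∀ P ∈ NF, ∀ n, P ^ n ∣ h ↔ n ≤ NF.count P := by
    intro P hP n
    obtain ⟨h1, h2, h3⟩ := (hmem P).1 hP
    rw [pow_dvd_iff_le_emultiplicity, emultiplicity_eq_count_normalizedFactors h1 hne, h2]
    exact Nat.cast_le
  have hstep : ∀ k, (Finset.univ.filter (fun α : K k =>
      (minpoly E α) ^ ((k + 1) / (minpoly E α).natDegree) ∣ h)).card =
      ∑ P ∈ NF.toFinset, if P.natDegree ∣ k + 1 ∧ (k + 1) / P.natDegree ≤ NF.count P then
        P.natDegree else 0 := by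
    intro k
    rw [Finset.card_eq_sum_card_fiberwise (f := fun α : K k => minpoly E α) (t := NF.toFinset)]
    · refine Finset.sum_congr rfl fun P hP => ?_
      rw [Multiset.mem_toFinset] at hP
      have hc := card_minpoly_eq (K := K k) P ((hmem P).1 hP).1 (hmonic P hP)
      rw [hK] at hc
      rw [Finset.filter_filter]
      by_cases h2 : (k + 1) / P.natDegree ≤ NF.count P
      · simp only [h2, and_true]
        rw [← hc]
        congr 1
        ext α
        simp only [Finset.mem_filter, Finset.mem_univ, true_and, and_iff_right_iff_imp]
        rintro rfl
        exact (hpow _ hP _).2 h2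
      · simp only [h2, and_false, if_false]
        rw [Finset.card_eq_zero, Finset.filter_eq_empty_iff]
        rintro α - ⟨h3, rfl⟩
        exact h2 ((hpow _ hP _).1 h3)
    · intro α hα
      have hα : (minpoly E α) ^ ((k + 1) / (minpoly E α).natDegree) ∣ h := by simpa using hα
      have hIntg : IsIntegral E α := Algebra.IsIntegral.isIntegral α
      have hd := minpoly.degree_dvd hIntg
      rw [hK] at hd
      have hpos : 0 < (k + 1) / (minpoly E α).natDegree :=
        Nat.div_pos (Nat.le_of_dvd (by omega) hd) (minpoly.natDegree_pos hIntg)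
      rw [Finset.mem_coe, Multiset.mem_toFinset, hmem]
      exact ⟨minpoly.irreducible hIntg, (minpoly.monic hIntg).normalize_eq_self,
        (dvd_pow_self _ hpos.ne').trans hα⟩
  rw [Finset.sum_congr rfl fun k _ => hstep k, Finset.sum_comm]
  have h1 : ∀ P ∈ NF.toFinset, (∑ k ∈ Finset.range m, if P.natDegree ∣ k + 1 ∧
      (k + 1) / P.natDegree ≤ NF.count P then P.natDegree else 0) = NF.count P • P.natDegree := by
    intro P hP
    rw [Multiset.mem_toFinset] at hP
    rw [← Finset.sum_filter, Finset.sum_const, count_mult]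
    · exact ((hmem P).1 hP).1.natDegree_pos
    · have h2 := natDegree_le_of_dvd ((hpow P hP _).2 le_rfl) hne
      rw [natDegree_pow, hdeg] at h2
      rwa [mul_comm]
  rw [Finset.sum_congr rfl h1, ← Finset.sum_multiset_map_count, ← natDegree_multiset_prod,
    hNF, prod_normalizedFactors_eq hne, hm.normalize_eq_self, hdeg]
  exact zero_notMem_normalizedFactors _

open Polynomial in
lemma div_sum {E : Type*} [Field E] [Finite E] (χ : MulChar E ℂ) (ψ : AddChar E ℂ) (u v : E)
    (m k : ℕ) (hk : k ≤ m) (P : E[X]) (hP : P ∈ monics E k) [DecidablePred fun h : E[X] => P ∣ h] :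
    ∑ h ∈ (monics E m).filter (fun h => P ∣ h), lamP χ ψ u v h =
      lamP χ ψ u v P * cP χ ψ u v (m - k) := by
  rw [cP, Finset.mul_sum]
  symm
  rw [mem_monics] at hP
  refine Finset.sum_bij (fun g _ => P * g) ?_ ?_ ?_ ?_
  · intro g hg
    rw [mem_monics] at hg
    rw [Finset.mem_filter, mem_monics]
    refine ⟨⟨hP.1.mul hg.1, ?_⟩, dvd_mul_right _ _⟩
    rw [hP.1.natDegree_mul hg.1, hP.2, hg.2]; omega
  · intro g _ g' _ e
    exact mul_left_cancel₀ hP.1.ne_zero e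
  · intro h hh
    rw [Finset.mem_filter, mem_monics] at hh
    obtain ⟨⟨h1, h2⟩, g, rfl⟩ := hh
    have hg := hP.1.of_mul_monic_left h1
    refine ⟨g, ?_, rfl⟩
    rw [mem_monics]
    rw [hP.1.natDegree_mul hg, hP.2] at h2
    exact ⟨hg, by omega⟩
  · intro g hg
    rw [mem_monics] at hg
    rw [lamP_mul _ _ _ _ _ _ hP.1 hg.1]

open Polynomial in
lemma cP_rec {E : Type} [Field E] [Finite E] (K : ℕ → Type) [∀ k, Field (K k)]
    [∀ k, Fintype (K k)] [∀ k, Algebra E (K k)] (hK : ∀ k, Module.finrank E (K k) = k + 1)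
    (χ : MulChar E ℂ) (ψ : AddChar E ℂ) (u v : E) (m : ℕ) :
    (m : ℂ) * cP χ ψ u v m = ∑ i ∈ Finset.range m, cP χ ψ u v i *
      (∑ x : K (m - i - 1), χ (Algebra.norm E (x + x⁻¹)) *
        ψ (Algebra.trace E _ (algebraMap E _ u * x + algebraMap E _ v * x⁻¹))) := by
  classical
  let π : ∀ k, K k → E[X] := fun k α => (minpoly E α) ^ ((k + 1) / (minpoly E α).natDegree)
  have hlam : ∀ k (α : K k), lamP χ ψ u v (π k α) = χ (Algebra.norm E (α + α⁻¹)) *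
        ψ (Algebra.trace E _ (algebraMap E _ u * α + algebraMap E _ v * α⁻¹)) := by
    intro k α
    have := lamP_pi χ ψ u v α
    rw [hK] at this
    exact this
  have hπ : ∀ k (α : K k), π k α ∈ monics E (k + 1) := by
    intro k α
    have hIntg : IsIntegral E α := Algebra.IsIntegral.isIntegral α
    have hd := minpoly.degree_dvd hIntg
    rw [hK] at hd
    rw [mem_monics]
    exact ⟨(minpoly.monic hIntg).pow _, by rw [natDegree_pow, Nat.div_mul_cancel hd]⟩
  have h1 : (m : ℂ) * cP χ ψ u v m = ∑ h ∈ monics E m, ∑ k ∈ Finset.range m, ∑ α : K k,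
      if π k α ∣ h then lamP χ ψ u v h else 0 := by
    rw [cP, Finset.mul_sum]
    refine Finset.sum_congr rfl fun h hh => ?_
    have := count_main K hK m h hh
    conv_lhs => rw [← this]
    push_cast
    rw [Finset.sum_mul]
    refine Finset.sum_congr rfl fun k _ => ?_
    rw [← Finset.sum_filter, Finset.sum_const, nsmul_eq_mul]
  rw [h1, Finset.sum_comm, ← Finset.sum_range_reflect]
  refine Finset.sum_congr rfl fun i hi => ?_
  rw [Finset.mem_range] at hi
  rw [Finset.sum_comm, Finset.mul_sum]
  have hmi : m - i - 1 = m - 1 - i := by omega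
  rw [hmi]
  refine Finset.sum_congr rfl fun α _ => ?_
  rw [← Finset.sum_filter, div_sum χ ψ u v m (m - 1 - i + 1) (by omega) _ (hπ _ α), hlam,
    show m - (m - 1 - i + 1) = i by omega, mul_comm]


lemma weil0 {E : Type} [Field E] [Fintype E] (χ : MulChar E ℂ) (ψ : AddChar E ℂ) (hψ : ψ ≠ 1)
    (u v : E) (huv : χ ≠ 1 ∨ u ≠ 0 ∨ v ≠ 0) :
    ‖∑ x : E, χ (x + x⁻¹) * ψ (u * x + v * x⁻¹)‖ ≤ 4 * √(Fintype.card E : ℝ) := by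
  classical
  obtain ⟨p, hp⟩ := CharP.exists E
  have : Fact p.Prime := ⟨CharP.char_is_prime E p⟩
  let K : ℕ → Type := fun k => FiniteField.Extension E p (k + 1)
  let : ∀ k, Field (K k) := fun k => inferInstanceAs (Field (FiniteField.Extension E p (k + 1)))
  let : ∀ k, Fintype (K k) := fun k =>
    Fintype.ofFinite (FiniteField.Extension E p (k + 1))
  let : ∀ k, Algebra E (K k) := fun k =>
    inferInstanceAs (Algebra E (FiniteField.Extension E p (k + 1)))
  have hK : ∀ k, Module.finrank E (K k) = k + 1 := fun k =>
    FiniteField.finrank_extension E p (k + 1)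
  let S : ℕ → ℂ := fun k => ∑ x : K (k - 1), χ (Algebra.norm E (x + x⁻¹)) *
    ψ (Algebra.trace E (K (k - 1)) (algebraMap E (K (k - 1)) u * x + algebraMap E (K (k - 1)) v * x⁻¹))
  obtain ⟨C, r0, hC⟩ := st_bound χ ψ hψ u v huv
  have hQ : (0 : ℝ) < Fintype.card E := by exact_mod_cast Fintype.card_pos
  have h1 := ps_main (fun m => cP χ ψ u v m) S (cP_zero_one χ ψ u v)
    (fun m hm => cP_vanish χ ψ hψ u v huv m hm)
    (fun m => cP_rec K hK χ ψ u v m) (Fintype.card E) hQ C (r0 + 1) (by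
      intro r hr
      exact hC r (by omega) (K (2 * r - 1)) (by rw [hK]; omega))
  have h2 : S 1 = ∑ x : E, χ (x + x⁻¹) * ψ (u * x + v * x⁻¹) := by
    have e : E ≃ₐ[E] K 0 := FiniteField.algEquivExtension E p 1 E (Module.finrank_self E)
    symm
    refine Fintype.sum_equiv e.toEquiv _ _ ?_
    intro x
    have a1 : Algebra.norm E (e x + (e x)⁻¹) = x + x⁻¹ := by
      rw [← map_inv₀ e, ← map_add, Algebra.norm_eq_of_algEquiv, Algebra.norm_self]; rfl
    have a2 : Algebra.trace E (K 0) (algebraMap E (K 0) u * e x + algebraMap E (K 0) v * (e x)⁻¹)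
        = u * x + v * x⁻¹ := by
      rw [← map_inv₀ e, ← e.commutes, ← e.commutes, ← map_mul, ← map_mul, ← map_add,
        Algebra.trace_eq_of_algEquiv, Algebra.trace_self]
      rfl
    show _ = χ (Algebra.norm E (e x + (e x)⁻¹)) * ψ (Algebra.trace E (K 0)
      (algebraMap E (K 0) u * e x + algebraMap E (K 0) v * (e x)⁻¹))
    rw [a1, a2]
  rwa [h2] at h1

lemma weilU {E : Type*} [Field E] [Fintype E] (χ : MulChar E ℂ) (ψ : AddChar E ℂ) (hψ : ψ ≠ 1)
    (u v : E) (huv : χ ≠ 1 ∨ u ≠ 0 ∨ v ≠ 0) :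
    ‖∑ x : E, χ (x + x⁻¹) * ψ (u * x + v * x⁻¹)‖ ≤ 4 * √(Fintype.card E : ℝ) := by
  classical
  obtain ⟨p, hp⟩ := CharP.exists E
  have : Fact p.Prime := ⟨CharP.char_is_prime E p⟩
  have e : E ≃ₐ[E] FiniteField.Extension E p 1 :=
    FiniteField.algEquivExtension E p 1 E (Module.finrank_self E)
  let : Fintype (FiniteField.Extension E p 1) := Fintype.ofFinite _
  let χ' : MulChar (FiniteField.Extension E p 1) ℂ :=
    { toFun := fun x => χ (e.symm x)
      map_one' := by simp
      map_mul' := by simp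
      map_nonunit' := by
        intro a ha
        have : a = 0 := by simpa using ha
        simp [this, MulChar.map_zero] }
  have hχ' : ∀ x, χ' x = χ (e.symm x) := fun x => rfl
  let ψ' : AddChar (FiniteField.Extension E p 1) ℂ :=
    { toFun := fun x => ψ (e.symm x)
      map_zero_eq_one' := by simp
      map_add_eq_mul' := by intro a b; simp [AddChar.map_add_eq_mul] }
  have hψ' : ∀ x, ψ' x = ψ (e.symm x) := fun x => rfl
  have h := weil0 χ' ψ' (by
    rw [AddChar.ne_one_iff] at hψ ⊢
    obtain ⟨a, ha⟩ := hψ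
    exact ⟨e a, by simpa [hψ'] using ha⟩) (e u) (e v) (by
    rcases huv with h | h | h
    · left
      rw [MulChar.ne_one_iff] at h ⊢
      obtain ⟨a, ha⟩ := h
      refine ⟨Units.map (e : E →* FiniteField.Extension E p 1) a, ?_⟩
      simpa [hχ'] using ha
    · right; left; simpa using h
    · right; right; simpa using h)
  rw [← Fintype.card_congr e.toEquiv] at h
  convert h using 2
  refine Fintype.sum_equiv e.toEquiv _ _ ?_
  intro x
  show _ = χ' (e x + (e x)⁻¹) * ψ' (e u * e x + e v * (e x)⁻¹)
  simp [hχ', hψ']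
open Classical in
/-- The weighted character sum over elements with prescribed traces. -/
noncomputable def TT {F E : Type*} [Field F] [Field E] [Fintype E] [Algebra F E] (a b : F)
    (χ : MulChar E ℂ) : ℂ :=
  ∑ x : E, if Algebra.trace F E x = a ∧ Algebra.trace F E x⁻¹ = b then χ (x + x⁻¹) else 0

lemma TT_bound {F E : Type*} [Field F] [Fintype F] [Field E] [Fintype E] [Algebra F E] (a b : F)
    (χ : MulChar E ℂ) :
    ‖(Fintype.card F : ℂ) ^ 2 * TT a b χ - ∑ x : E, χ (x + x⁻¹)‖ ≤
      ((Fintype.card F : ℝ) ^ 2 - 1) * (4 * √(Fintype.card E : ℝ)) := by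
  classical
  obtain ⟨ψ, hψ⟩ := (AddChar.exists_apply_ne_zero (α := F) (a := 1)).2 one_ne_zero
  have hψ1 : ψ ≠ 1 := by rw [AddChar.ne_one_iff]; exact ⟨1, hψ⟩
  have hprim : ψ.IsPrimitive := AddChar.IsPrimitive.of_ne_one hψ1
  let Ψ : AddChar E ℂ := ψ.compAddMonoidHom (Algebra.trace F E).toAddMonoidHom
  have hΨ : ∀ x, Ψ x = ψ (Algebra.trace F E x) := fun x => rfl
  have hΨ1 : Ψ ≠ 1 := by
    rw [AddChar.ne_one_iff]
    obtain ⟨y, hy⟩ := Algebra.trace_surjective F E 1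
    exact ⟨y, by rw [hΨ, hy]; exact hψ⟩
  let G : F × F → ℂ := fun w => ψ (-(w.1 * a + w.2 * b)) *
    ∑ x : E, χ (x + x⁻¹) * Ψ (algebraMap F E w.1 * x + algebraMap F E w.2 * x⁻¹)
  have h1 : (Fintype.card F : ℂ) ^ 2 * TT a b χ = ∑ w : F × F, G w := by
    simp only [G, Finset.mul_sum]
    rw [Finset.sum_comm, TT, Finset.mul_sum]
    refine Finset.sum_congr rfl fun x _ => ?_
    have e1 : ∀ w : F × F, ψ (-(w.1 * a + w.2 * b)) * (χ (x + x⁻¹) *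
        Ψ (algebraMap F E w.1 * x + algebraMap F E w.2 * x⁻¹)) =
        χ (x + x⁻¹) * (ψ (w.1 * (Algebra.trace F E x - a)) * ψ (w.2 * (Algebra.trace F E x⁻¹ - b))) := by
      intro w
      rw [hΨ, mul_left_comm, ← AddChar.map_add_eq_mul, ← AddChar.map_add_eq_mul]
      congr 2
      rw [← Algebra.smul_def, ← Algebra.smul_def, map_add, map_smul, map_smul, smul_eq_mul, smul_eq_mul]
      ring
    simp only [e1]
    rw [← Finset.mul_sum, Fintype.sum_prod_type]
    simp only [← Finset.mul_sum, ← Finset.sum_mul]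
    rw [AddChar.sum_mulShift _ hprim, AddChar.sum_mulShift _ hprim]
    by_cases h1 : Algebra.trace F E x = a <;> by_cases h2 : Algebra.trace F E x⁻¹ = b <;>
      simp [h1, h2, sub_eq_zero]
    ring
  have h2 : G 0 = ∑ x : E, χ (x + x⁻¹) := by simp [G]
  rw [h1, ← h2, ← Finset.add_sum_erase _ _ (Finset.mem_univ (0 : F × F)), add_sub_cancel_left]
  refine (norm_sum_le_of_le (f := G) (n := fun _ => 4 * √(Fintype.card E : ℝ)) _ ?_).trans ?_
  · intro w hw
    have hw : w ≠ 0 := Finset.ne_of_mem_erase hw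
    simp only [G, norm_mul, AddChar.norm_apply, one_mul]
    refine weilU χ Ψ hΨ1 _ _ (Or.inr ?_)
    by_contra hc
    push Not at hc
    exact hw (Prod.ext (by simpa using hc.1) (by simpa using hc.2))
  · rw [Finset.sum_const, Finset.card_erase_of_mem (Finset.mem_univ _), Finset.card_univ,
      Fintype.card_prod, nsmul_eq_mul, Nat.cast_sub (Nat.mul_pos Fintype.card_pos Fintype.card_pos)]
    push_cast
    rw [sq]

lemma TT_bound_ne {F E : Type*} [Field F] [Fintype F] [Field E] [Fintype E] [Algebra F E] (a b : F)
    (χ : MulChar E ℂ) (hχ : χ ≠ 1) :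
    ‖(Fintype.card F : ℂ) ^ 2 * TT a b χ‖ ≤ (Fintype.card F : ℝ) ^ 2 * (4 * √(Fintype.card E : ℝ)) := by
  have h := TT_bound a b χ
  obtain ⟨ψ, hψ⟩ := (AddChar.exists_apply_ne_zero (α := E) (a := 1)).2 one_ne_zero
  have hψ1 : ψ ≠ 1 := by rw [AddChar.ne_one_iff]; exact ⟨1, hψ⟩
  have h2 := weilU χ ψ hψ1 0 0 (Or.inl hχ)
  simp only [zero_mul, add_zero, AddChar.map_zero_eq_one, mul_one] at h2
  have h3 := norm_sub_norm_le ((Fintype.card F : ℂ) ^ 2 * TT a b χ) (∑ x : E, χ (x + x⁻¹))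
  linarith

lemma TT_one {F E : Type*} [Field F] [Fintype F] [Field E] [Fintype E] [Algebra F E] (a b : F) :
    (Fintype.card E : ℝ) - 3 - ((Fintype.card F : ℝ) ^ 2 - 1) * (4 * √(Fintype.card E : ℝ)) ≤
    ‖(Fintype.card F : ℂ) ^ 2 * TT a b (1 : MulChar E ℂ)‖ := by
  classical
  have h := TT_bound a b (1 : MulChar E ℂ)
  have h1 : (Finset.univ.filter (fun x : E => ¬ (x + x⁻¹ ≠ 0))).card ≤ 3 := by
    let P : Polynomial E := Polynomial.X ^ 3 + Polynomial.X
    have hdeg : P.natDegree = 3 := by simp only [P]; compute_degree!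
    have hP0 : P ≠ 0 := by intro h; rw [h] at hdeg; simp at hdeg
    rw [← hdeg]
    refine Polynomial.card_le_degree_of_subset_roots (p := P) ?_
    intro x hx
    rw [Polynomial.mem_roots hP0]
    have hx : x + x⁻¹ = 0 := by simpa using hx
    by_cases h0 : x = 0
    · simp [P, h0]
    · field_simp at hx
      simp only [P, Polynomial.IsRoot.def, Polynomial.eval_add, Polynomial.eval_pow, Polynomial.eval_X]
      linear_combination x * hx
  have h2 := Finset.card_filter_add_card_filter_not (s := (Finset.univ : Finset E)) (fun x : E => x + x⁻¹ ≠ 0)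
  rw [Finset.card_univ] at h2
  have h3 : ∑ x : E, (1 : MulChar E ℂ) (x + x⁻¹) = ((Finset.univ.filter (fun x : E => x + x⁻¹ ≠ 0)).card : ℂ) := by
    rw [Finset.card_filter, Nat.cast_sum]
    refine Finset.sum_congr rfl fun x _ => ?_
    by_cases hx : x + x⁻¹ = 0
    · simp [hx, MulChar.map_zero]
    · simp [hx, MulChar.one_apply (isUnit_iff_ne_zero.2 hx)]
  have h4 := norm_sub_norm_le (∑ x : E, (1 : MulChar E ℂ) (x + x⁻¹)) ((Fintype.card F : ℂ) ^ 2 * TT a b (1 : MulChar E ℂ))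
  rw [norm_sub_rev] at h4
  have h5 : ‖∑ x : E, (1 : MulChar E ℂ) (x + x⁻¹)‖ = (Finset.univ.filter (fun x : E => x + x⁻¹ ≠ 0)).card := by
    rw [h3]; simp
  rw [h5] at h4
  have h6 : (Fintype.card E : ℝ) ≤ (Finset.univ.filter (fun x : E => x + x⁻¹ ≠ 0)).card + 3 := by
    have h7 : Fintype.card E ≤ (Finset.univ.filter (fun x : E => x + x⁻¹ ≠ 0)).card + 3 := by omega
    exact_mod_cast h7
  linarith

lemma prod_char_ne_one {M : Type*} [CommGroup M] (f : ℕ → M) (D : Finset ℕ)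
    (hp : ∀ l ∈ D, l.Prime) (hf : ∀ l ∈ D, orderOf (f l) = l) (hD : D.Nonempty) :
    ∏ l ∈ D, f l ≠ 1 := by
  intro h
  obtain ⟨l, hl⟩ := hD
  rw [← Finset.mul_prod_erase _ _ hl] at h
  have h1 : (∏ k ∈ D.erase l, f k) ^ (∏ k ∈ D.erase l, k) = 1 := by
    rw [← Finset.prod_pow]
    refine Finset.prod_eq_one fun k hk => ?_
    rw [← orderOf_dvd_iff_pow_eq_one, hf k (Finset.mem_of_mem_erase hk)]
    exact Finset.dvd_prod_of_mem _ hk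
  have h2 : (f l) ^ (∏ k ∈ D.erase l, k) = 1 := by
    have := congrArg (· ^ (∏ k ∈ D.erase l, k)) h
    simpa only [mul_pow, h1, mul_one, one_pow] using this
  rw [← orderOf_dvd_iff_pow_eq_one, hf l hl, (hp l hl).prime.dvd_finsetProd_iff] at h2
  obtain ⟨k, hk, hlk⟩ := h2
  have := (Nat.prime_dvd_prime_iff_eq (hp l hl) (hp k (Finset.mem_of_mem_erase hk))).1 hlk
  exact Finset.ne_of_mem_erase hk this.symm

lemma prod_char_apply {E : Type*} [Field E] (f : ℕ → MulChar E ℂ) (D : Finset ℕ) (t : E) :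
    (∏ l ∈ D, f l) t = (1 : MulChar E ℂ) t * ∏ l ∈ D, f l t := by
  classical
  induction D using Finset.induction_on with
  | empty => simp
  | insert l D hl ih =>
    rw [Finset.prod_insert hl, Finset.prod_insert hl, MulChar.mul_apply, ih]; ring

lemma primitive_of_chars {E : Type*} [Field E] [Fintype E] (f : ℕ → MulChar E ℂ)
    (hf : ∀ l ∈ (Fintype.card E - 1).primeFactors, orderOf (f l) = l) (t : E) (ht : t ≠ 0)
    (h : ∀ l ∈ (Fintype.card E - 1).primeFactors, f l t ≠ 1) : orderOf t = Fintype.card E - 1 := by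
  classical
  have hQ : 0 < Fintype.card E - 1 := by
    have := Fintype.one_lt_card (α := E); omega
  refine orderOf_eq_of_pow_and_pow_div_prime hQ (FiniteField.pow_card_sub_one_eq_one t ht) ?_
  intro l hl hld hc
  have hm : l ∈ (Fintype.card E - 1).primeFactors := Nat.mem_primeFactors.2 ⟨hl, hld, hQ.ne'⟩
  apply h l hm
  obtain ⟨g, hg⟩ := IsCyclic.exists_generator (α := Eˣ)
  obtain ⟨k, hk⟩ := (mem_powers_iff_mem_zpowers (x := g) (y := Units.mk0 t ht)).2 (hg _)
  have hk' : g ^ k = Units.mk0 t ht := hk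
  have hord : orderOf g = Fintype.card E - 1 := by
    rw [orderOf_eq_card_of_forall_mem_zpowers hg, Nat.card_eq_fintype_card, Fintype.card_units]
  obtain ⟨c, hc'⟩ := hld
  have h1 : g ^ (k * c) = 1 := by
    rw [pow_mul, hk']
    ext
    rw [hc', Nat.mul_div_cancel_left _ hl.pos] at hc
    simpa using hc
  rw [← orderOf_dvd_iff_pow_eq_one, hord, hc'] at h1
  have hc0 : 0 < c := by rcases Nat.eq_zero_or_pos c with h | h; · simp [h] at hc'; omega
                         · exact h
  obtain ⟨j, rfl⟩ := Nat.dvd_of_mul_dvd_mul_right hc0 h1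
  have h2 : t = ((g ^ j : Eˣ) : E) ^ l := by
    have := congrArg (Units.val) hk'
    simp only [Units.val_mk0] at this
    rw [← this]; push_cast; rw [← pow_mul, mul_comm]
  rw [h2, map_pow, ← MulChar.pow_apply_coe, ← hf l hm, hf l hm]
  have h3 : f l ^ l = 1 := by
    have := pow_orderOf_eq_one (f l)
    rwa [hf l hm] at this
  rw [h3, MulChar.one_apply_coe]

/-- If `q^(n/2 - 2) > 2^(ω(q^n - 1) + 2)` then for every `a, b ∈ F_q` there is a
nonzero `ξ ∈ F_{q^n}` with `Tr ξ = a`, `Tr ξ⁻¹ = b` and `ξ + ξ⁻¹` primitive. -/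
theorem stmt4 (q n : ℕ) (hq : IsPrimePow q) (hn : 0 < n)
    (hcond : (q : ℝ) ^ ((n : ℝ) / 2 - 2) > 2 ^ ((q ^ n - 1).primeFactors.card + 2))
    (F E : Type*) [Field F] [Fintype F] [Field E] [Fintype E] [Algebra F E]
    (hF : Fintype.card F = q) (hE : Fintype.card E = q ^ n) (a b : F) :
    ∃ ξ : E, ξ ≠ 0 ∧ Algebra.trace F E ξ = a ∧ Algebra.trace F E ξ⁻¹ = b ∧
      orderOf (ξ + ξ⁻¹) = q ^ n - 1 := by
  classical
  have hq0 : (0 : ℝ) < q := by exact_mod_cast hq.pos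
  have hq1 : (1 : ℝ) ≤ q := by exact_mod_cast hq.pos
  set P := (q ^ n - 1).primeFactors with hP
  set R : ℝ := √(Fintype.card E : ℝ) with hR
  set W : ℝ := 2 ^ P.card with hW
  have hW1 : (1 : ℝ) ≤ W := one_le_pow₀ (by norm_num)
  have hRQ : R ^ 2 = Fintype.card E := Real.sq_sqrt (by positivity)
  have hRW : 4 * (q : ℝ) ^ 2 * W < R := by
    have h1 : (q : ℝ) ^ ((n : ℝ) / 2) = R := by
      rw [hR, hE, Real.sqrt_eq_rpow, Nat.cast_pow, ← Real.rpow_natCast, ← Real.rpow_mul hq0.le]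
      congr 1; ring
    rw [gt_iff_lt, Real.rpow_sub hq0, h1, lt_div_iff₀ (by positivity), pow_add, ← hW] at hcond
    have h2 : (q : ℝ) ^ (2 : ℝ) = (q : ℝ) ^ 2 := by exact_mod_cast Real.rpow_natCast (q : ℝ) 2
    rw [h2] at hcond
    linarith
  have hR4 : 4 < R := by nlinarith [mul_le_mul (one_le_pow₀ (n := 2) hq1) hW1 (by norm_num) (by positivity)]
  have hex : ∀ l ∈ P, ∃ χ : MulChar E ℂ, orderOf χ = l := by
    intro l hl
    have hl' := Nat.mem_primeFactors.1 hl
    exact MulChar.exists_mulChar_orderOf E (by rw [hE]; exact hl'.2.1)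
      (Complex.isPrimitiveRoot_exp l hl'.1.ne_zero)
  choose! f hf using hex
  by_contra hcon
  push Not at hcon
  have hz : ∀ x : E, Algebra.trace F E x = a ∧ Algebra.trace F E x⁻¹ = b →
      (1 : MulChar E ℂ) (x + x⁻¹) * ∏ l ∈ P, (1 + -(f l (x + x⁻¹))) = 0 := by
    rintro x ⟨hxa, hxb⟩
    by_cases ht : x + x⁻¹ = 0
    · simp [ht, MulChar.map_zero]
    have hx0 : x ≠ 0 := by rintro rfl; simp at ht
    have hne := hcon x hx0 hxa hxb
    rw [mul_eq_zero]; right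
    by_contra hpr
    replace hpr := Finset.prod_ne_zero_iff.1 hpr
    apply hne
    rw [← hE]
    refine primitive_of_chars f (by rw [hE]; exact hf) _ ht ?_
    rw [hE]
    intro l hl h1
    exact hpr l hl (by rw [h1]; ring)
  have hsum : ∑ D ∈ P.powerset, (-1 : ℂ) ^ D.card * TT a b (∏ l ∈ D, f l) = 0 := by
    simp only [TT, Finset.mul_sum]
    rw [Finset.sum_comm]
    refine Finset.sum_eq_zero fun x _ => ?_
    by_cases hx : Algebra.trace F E x = a ∧ Algebra.trace F E x⁻¹ = b
    · rw [← hz x hx, Finset.prod_one_add, Finset.mul_sum]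
      refine Finset.sum_congr rfl fun D _ => ?_
      rw [if_pos hx, prod_char_apply, Finset.prod_neg]
      ring
    · simp [hx]
  rw [← Finset.add_sum_erase _ _ (Finset.empty_mem_powerset P)] at hsum
  simp only [Finset.card_empty, pow_zero, one_mul, Finset.prod_empty] at hsum
  have h1 := TT_one (E := E) a b
  rw [eq_neg_of_add_eq_zero_left hsum, mul_neg, norm_neg, Finset.mul_sum, hF] at h1
  have h2 : ‖∑ D ∈ P.powerset.erase ∅, (q : ℂ) ^ 2 * ((-1 : ℂ) ^ D.card * TT a b (∏ l ∈ D, f l))‖ ≤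
      ∑ D ∈ P.powerset.erase ∅, (q : ℝ) ^ 2 * (4 * R) := by
    refine norm_sum_le_of_le _ fun D hD => ?_
    rw [Finset.mem_erase, Finset.mem_powerset] at hD
    have h3 := TT_bound_ne a b (∏ l ∈ D, f l) (prod_char_ne_one f D
      (fun l hl => (Nat.mem_primeFactors.1 (hD.2 hl)).1) (fun l hl => hf l (hD.2 hl))
      (Finset.nonempty_iff_ne_empty.2 hD.1))
    rw [hF] at h3
    rw [mul_left_comm, norm_mul]
    simpa using h3
  rw [Finset.sum_const, Finset.card_erase_of_mem (Finset.empty_mem_powerset P), Finset.card_powerset,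
    nsmul_eq_mul, Nat.cast_sub Nat.one_le_two_pow] at h2
  push_cast at h2
  rw [← hW] at h2
  have h4 := h1.trans h2
  rw [← hRQ, Real.sqrt_sq (by positivity)] at h4
  nlinarith
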